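/- Let A satisfy (H1), let β_i ∈ (-2,0] for all i ∈ I with not all β_i equal to 0, and let u be any solution of the singular Liouville system on ℝ². Then every component u_i is a radial function, i.e. u_i(x) depends only on |x|. -/

import Mathlib

open Set MeasureTheory

/-- Hypothesis (H1): symmetric, nonnegative entries, irreducible, invertible. -/
def H1 {n : ℕ} (A : Matrix (Fin n) (Fin n) ℝ) : Prop :=
  A.IsSymm ∧ (∀ i j, 0 ≤ A i j) ∧
  (∀ S : Finset (Fin n), S.Nonempty → S ≠ Finset.univ → ∃ i ∈ S, ∃ j ∈ Sᶜ, A i j ≠ 0) ∧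
  IsUnit A.det

/-- The Euclidean norm on ℝ². -/
noncomputable def nrm (x : ℝ × ℝ) : ℝ := Real.sqrt (x.1 ^ 2 + x.2 ^ 2)

/-- The Laplacian on ℝ²: sum of the two second partial derivatives. -/
noncomputable def lap (u : ℝ × ℝ → ℝ) (x : ℝ × ℝ) : ℝ :=
  deriv (deriv (fun s => u (s, x.2))) x.1 + deriv (deriv (fun t => u (x.1, t))) x.2

/-- Solution (not necessarily radial) of the singular Liouville system on ℝ²
with the finite-energy condition. -/
def PDESolution {n : ℕ} (A : Matrix (Fin n) (Fin n) ℝ) (β : Fin n → ℝ)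
    (u : Fin n → ℝ × ℝ → ℝ) : Prop :=
  (∀ i, Continuous (u i)) ∧
  (∀ i, ∀ x : ℝ × ℝ, x ≠ 0 → ContDiffAt ℝ 2 (u i) x) ∧
  (∀ i, ∀ x : ℝ × ℝ, x ≠ 0 →
      lap (u i) x + ∑ j, A i j * nrm x ^ β j * Real.exp (u j x) = 0) ∧
  (∀ i, Integrable (fun x : ℝ × ℝ => nrm x ^ β i * Real.exp (u i x)))

open Filter Topology Metric InnerProductSpace Laplacian
open scoped Real Gradient ComplexConjugate

/-!
The total energy density `F = ∑ |x|^{β_j} e^{u_j}` satisfies `ΔF ≥ -K F²` away from the origin, so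
finite energy and `ε`-regularity give `|x|² F → 0`. Hence `u` grows more slowly than any power of
`|x|`, and the system behaves at infinity like one with a subcritical potential.

The reflections of `u` in the lines `re z = l < 0` are then compared with `u` by moving planes.
Because `β_j ≤ 0`, the gap between the reflection and `u` satisfies a cooperative inequality with
the potential `∑ a_{ij} |x|^{β_j} e^{u_j}`. It is compared with a barrier that grows like
`|x|^{1/4}`, is superharmonic enough to absorb the potential at infinity, and carries a bounded
exponential correction that absorbs it in a thin strip along the line. Irreducibility and a
nonzero `β_j` turn nonnegativity of the gap into strict positivity, so the line moves on to `l = 0`.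
Applied to all rotations of `u`, this makes `u` invariant under every reflection through the
origin.
-/

section FDeriv

variable {E F G : Type*} [NormedAddCommGroup E] [NormedSpace ℝ E]
  [NormedAddCommGroup F] [NormedSpace ℝ F] [NormedAddCommGroup G] [NormedSpace ℝ G]

lemma fderiv_fderiv_comp_apply {g : F → G} {f : E → F} {x : E} (hg : ContDiffAt ℝ 2 g (f x))
    (hf : ContDiffAt ℝ 2 f x) (v w : E) :
    fderiv ℝ (fderiv ℝ (g ∘ f)) x v w =
      fderiv ℝ (fderiv ℝ g) (f x) (fderiv ℝ f x v) (fderiv ℝ f x w) +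
        fderiv ℝ g (f x) (fderiv ℝ (fderiv ℝ f) x v w) := by
  have hchain : fderiv ℝ (g ∘ f) =ᶠ[𝓝 x] fun y ↦ (fderiv ℝ g (f y)).comp (fderiv ℝ f y) := by
    filter_upwards [hf.eventually (by simp),
      hf.continuousAt.eventually (hg.eventually (by simp))] with y hfy hgy
    exact fderiv_comp y (hgy.differentiableAt two_ne_zero) (hfy.differentiableAt two_ne_zero)
  have hg' : HasFDerivAt (fun y ↦ fderiv ℝ g (f y)) _ x :=
    ((hg.fderiv_right (m := 1) le_rfl).differentiableAt one_ne_zero).hasFDerivAt.comp x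
      (hf.differentiableAt two_ne_zero).hasFDerivAt
  have hf' := ((hf.fderiv_right (m := 1) le_rfl).differentiableAt one_ne_zero).hasFDerivAt
  rw [hchain.fderiv_eq, (hg'.clm_comp hf').fderiv]
  simp [add_comm]

end FDeriv

/-! ### The Laplacian -/

section Laplacian

variable {E F : Type*} [NormedAddCommGroup E] [InnerProductSpace ℝ E] [FiniteDimensional ℝ E]
  [NormedAddCommGroup F] [NormedSpace ℝ F]

lemma laplacian_eq_sum_fderiv_fderiv {ι : Type*} [Fintype ι] (b : OrthonormalBasis ι ℝ E)
    (f : E → F) (x : E) : Δ f x = ∑ i, fderiv ℝ (fderiv ℝ f) x (b i) (b i) := by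
  simp [laplacian_eq_iteratedFDeriv_orthonormalBasis f b, iteratedFDeriv_two_apply]

lemma laplacian_sum {ι : Type*} (s : Finset ι) {f : ι → E → F} {x : E}
    (hf : ∀ i ∈ s, ContDiffAt ℝ 2 (f i) x) :
    Δ (fun y ↦ ∑ i ∈ s, f i y) x = ∑ i ∈ s, Δ (f i) x := by
  classical
  induction s using Finset.induction_on with
  | empty => simp
  | insert i s hi ih =>
    simp only [Finset.sum_insert hi]
    rw [← ih fun j hj ↦ hf j (Finset.mem_insert_of_mem hj)]
    exact (hf i (Finset.mem_insert_self i s)).laplacian_add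
      (ContDiffAt.sum fun j hj ↦ hf j (Finset.mem_insert_of_mem hj))

lemma laplacian_const_mul {f : E → ℝ} {x : E} (a : ℝ) (hf : ContDiffAt ℝ 2 f x) :
    Δ (fun y ↦ a * f y) x = a * Δ f x :=
  laplacian_smul a hf

lemma laplacian_comp_add_left (f : E → F) (a x : E) :
    Δ (fun y ↦ f (a + y)) x = Δ f (a + x) := by
  simp [laplacian_eq_iteratedFDeriv_stdOrthonormalBasis, iteratedFDeriv_comp_add_left]

lemma laplacian_comp_linearIsometryEquiv {E' : Type*} [NormedAddCommGroup E']
    [InnerProductSpace ℝ E'] [FiniteDimensional ℝ E'] (f : E' → F) (e : E ≃ₗᵢ[ℝ] E') (x : E) :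
    Δ (fun y ↦ f (e y)) x = Δ f (e x) := by
  have h := e.toContinuousLinearEquiv.iteratedFDerivWithin_comp_right f uniqueDiffOn_univ
    (mem_univ (e x)) 2
  simp only [preimage_univ, iteratedFDerivWithin_univ] at h
  simp only [laplacian_eq_iteratedFDeriv_orthonormalBasis f ((stdOrthonormalBasis ℝ E).map e),
    laplacian_eq_iteratedFDeriv_orthonormalBasis _ (stdOrthonormalBasis ℝ E)]
  refine Finset.sum_congr rfl fun i _ ↦ ?_
  trans iteratedFDeriv ℝ 2 (f ∘ e) x ![stdOrthonormalBasis ℝ E i, stdOrthonormalBasis ℝ E i]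
  · rfl
  erw [h]
  simp only [ContinuousMultilinearMap.compContinuousLinearMap_apply]
  congr 1
  ext j
  fin_cases j <;> simp

lemma fderiv_fderiv_real_apply {φ : ℝ → ℝ} {t : ℝ} (hφ : ContDiffAt ℝ 2 φ t) (r s : ℝ) :
    fderiv ℝ (fderiv ℝ φ) t r s = r * s * deriv (deriv φ) t := by
  have h := ((hφ.fderiv_right (m := 1) le_rfl).differentiableAt one_ne_zero).hasFDerivAt
  have h1 : HasDerivAt (deriv φ) (fderiv ℝ (fderiv ℝ φ) t 1 1) t := by
    simpa using (h.clm_apply (hasFDerivAt_const (1 : ℝ) t)).hasDerivAt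
  rw [h1.deriv, ← mul_one r, ← mul_one s, ← smul_eq_mul r, ← smul_eq_mul s, map_smul, map_smul]
  simp [mul_assoc, mul_left_comm]

lemma laplacian_real_comp {φ : ℝ → ℝ} {f : E → ℝ} {x : E} (hφ : ContDiffAt ℝ 2 φ (f x))
    (hf : ContDiffAt ℝ 2 f x) :
    Δ (fun y ↦ φ (f y)) x = deriv (deriv φ) (f x) * ‖∇ f x‖ ^ 2 + deriv φ (f x) * Δ f x := by
  have hgrad (v : E) : fderiv ℝ f x v = inner ℝ v (∇ f x) := by
    rw [real_inner_comm, ← toDual_gradient, toDual_apply_apply]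
  set b := stdOrthonormalBasis ℝ E
  have hcomp (v : E) : fderiv ℝ (fderiv ℝ fun y ↦ φ (f y)) x v v =
      deriv (deriv φ) (f x) * inner ℝ v (∇ f x) ^ 2 +
        deriv φ (f x) * fderiv ℝ (fderiv ℝ f) x v v := by
    have h := fderiv_fderiv_comp_apply hφ hf v v
    rw [Function.comp_def, fderiv_fderiv_real_apply hφ, hgrad, fderiv_eq_smul_deriv,
      smul_eq_mul] at h
    rw [h]
    ring
  simp only [laplacian_eq_sum_fderiv_fderiv b, hcomp, Finset.sum_add_distrib, ← Finset.mul_sum,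
    b.sum_sq_inner_right]

lemma gradient_norm_sq (x : E) : ∇ (fun y : E ↦ ‖y‖ ^ 2) x = (2 : ℝ) • x := by
  refine (hasGradientAt_iff_hasFDerivAt.2 ?_).gradient
  have h : toDual ℝ E ((2 : ℝ) • x) = 2 • innerSL ℝ x := by
    ext v
    simp
  exact h ▸ (hasStrictFDerivAt_norm_sq x).hasFDerivAt

lemma laplacian_norm_sq (x : E) : Δ (fun y : E ↦ ‖y‖ ^ 2) x = 2 * Module.finrank ℝ E := by
  let B : E →L[ℝ] E →L[ℝ] ℝ := 2 • innerSL ℝ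
  have hB : fderiv ℝ (fun y : E ↦ ‖y‖ ^ 2) = B := by
    ext y v
    rw [fderiv_norm_sq]
    rfl
  have hdiag (v : E) : B v v = 2 * ‖v‖ ^ 2 := by
    calc B v v = 2 • inner ℝ v v := rfl
      _ = 2 * ‖v‖ ^ 2 := by simp
  simp [laplacian_eq_sum_fderiv_fderiv (stdOrthonormalBasis ℝ E), hB, hdiag, mul_comm]

lemma deriv_deriv_rpow_const (p t : ℝ) :
    deriv (deriv fun s : ℝ ↦ s ^ p) t = p * (p - 1) * t ^ (p - 2) := by
  rw [funext fun s ↦ Real.deriv_rpow_const s p, deriv_const_mul_field, Real.deriv_rpow_const]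
  ring_nf

lemma laplacian_norm_rpow {x : E} (hx : x ≠ 0) (e : ℝ) :
    Δ (fun y : E ↦ ‖y‖ ^ e) x = e * (e + Module.finrank ℝ E - 2) * ‖x‖ ^ (e - 2) := by
  have hx' : 0 < ‖x‖ := norm_pos_iff.2 hx
  have hx2 : ‖x‖ ^ 2 ≠ 0 := by positivity
  have hpow (y : E) : ‖y‖ ^ e = (‖y‖ ^ 2) ^ (e / 2) := by
    rw [← Real.rpow_natCast_mul (norm_nonneg y)]; congr 1; push_cast; ring
  simp only [hpow]
  rw [laplacian_real_comp (φ := fun t ↦ t ^ (e / 2)) (f := fun y : E ↦ ‖y‖ ^ 2)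
    (Real.contDiffAt_rpow_const_of_ne hx2) (contDiff_norm_sq ℝ).contDiffAt, gradient_norm_sq,
    laplacian_norm_sq]
  have hpow' (p : ℝ) : (‖x‖ ^ 2) ^ p = ‖x‖ ^ (2 * p) := by
    rw [← Real.rpow_natCast_mul hx'.le]
    norm_cast
  have hsplit : ‖x‖ ^ (e - 2) = ‖x‖ ^ (e - 2 - 2) * ‖x‖ ^ 2 := by
    rw [← Real.rpow_natCast, ← Real.rpow_add hx']
    norm_num
  rw [deriv_deriv_rpow_const, Real.deriv_rpow_const, hpow', hpow', norm_smul,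
    show 2 * (e / 2 - 2) = e - 2 - 2 by ring, show 2 * (e / 2 - 1) = e - 2 by ring, hsplit,
    Real.norm_two]
  ring

lemma exp_mul_laplacian_le_laplacian_exp {f : E → ℝ} {x : E} (hf : ContDiffAt ℝ 2 f x) :
    Real.exp (f x) * Δ f x ≤ Δ (fun y ↦ Real.exp (f y)) x := by
  rw [laplacian_real_comp Real.contDiff_exp.contDiffAt hf, Real.deriv_exp, Real.deriv_exp]
  exact le_add_of_nonneg_left (by positivity)

end Laplacian

lemma laplacian_comp_holomorphic {E : Type*} [NormedAddCommGroup E] [NormedSpace ℝ E]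
    {f : ℂ → E} {φ : ℂ → ℂ} {z : ℂ} (hf : ContDiffAt ℝ 2 f (φ z)) (hφ : ContDiffAt ℂ 2 φ z) :
    Δ (fun w ↦ f (φ w)) z = ‖deriv φ z‖ ^ 2 • Δ f (φ z) := by
  have hφ' := (hφ.differentiableAt two_ne_zero).hasDerivAt.hasFDerivAt.restrictScalars ℝ
  have hdφ (v : ℂ) : fderiv ℝ φ z v = v * deriv φ z := by rw [hφ'.fderiv]; simp
  have hharm : Δ φ z = 0 := hφ.harmonicAt.2.self_of_nhds
  set b := Complex.orthonormalBasisOneI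
  set B := fderiv ℝ (fderiv ℝ f) (φ z)
  have hB (w : ℂ) : B w w + B (Complex.I * w) (Complex.I * w) =
      ‖w‖ ^ 2 • (B 1 1 + B Complex.I Complex.I) := by
    obtain ⟨a, c⟩ := w
    have hw : (⟨a, c⟩ : ℂ) = a • (1 : ℂ) + c • Complex.I := by apply Complex.ext <;> simp
    have hIw : Complex.I * ⟨a, c⟩ = a • Complex.I - c • (1 : ℂ) := by apply Complex.ext <;> simp
    rw [hIw, ← Complex.normSq_eq_norm_sq, Complex.normSq_mk, hw]
    simp only [map_add, map_sub, map_smul, add_apply, sub_apply, smul_apply]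
    module
  rw [← Function.comp_def]
  simp only [laplacian_eq_sum_fderiv_fderiv b] at hharm ⊢
  simp only [fderiv_fderiv_comp_apply hf (hφ.restrict_scalars ℝ), Finset.sum_add_distrib]
  rw [← map_sum, hharm]
  simpa [b, hdφ] using hB (deriv φ z)

/-! ### Subharmonic functions in the plane -/

section MeanValue

open Complex (I)

lemma hasDerivAt_integral_vertical {E : Type*} [NormedAddCommGroup E] [NormedSpace ℝ E]
    {U : Set ℝ} (hU : IsOpen U) {G : ℂ → E}
    (hG : ∀ z, z.re ∈ U → ContDiffAt ℝ 1 G z) (a b : ℝ) {t : ℝ} (ht : t ∈ U) :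
    HasDerivAt (fun t : ℝ ↦ ∫ θ in a..b, G (t + θ * I))
      (∫ θ in a..b, fderiv ℝ G (t + θ * I) 1) t := by
  obtain ⟨δ, hδ, hball⟩ := Metric.nhds_basis_closedBall.mem_iff.1 (hU.mem_nhds ht)
  have hline (s θ : ℝ) (hs : s ∈ U) : ContDiffAt ℝ 1 G (s + θ * I) := hG _ (by simpa using hs)
  have hcont (s : ℝ) (hs : s ∈ U) : Continuous fun θ : ℝ ↦ G (s + θ * I) :=
    continuous_iff_continuousAt.2 fun θ ↦
      (hline s θ hs).continuousAt.comp (f := fun θ : ℝ ↦ (s + θ * I : ℂ)) (by fun_prop)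
  have hcont' : ContinuousOn (fun p : ℝ × ℝ ↦ fderiv ℝ G (p.1 + p.2 * I) 1) (U ×ˢ univ) :=
    fun p hp ↦ (((hline p.1 p.2 hp.1).fderiv_right (m := 0) le_rfl).continuousAt.comp
      (f := fun p : ℝ × ℝ ↦ (p.1 + p.2 * I : ℂ)) (by fun_prop)).continuousWithinAt.clm_apply
        continuousWithinAt_const
  have hderiv : Continuous fun θ : ℝ ↦ fderiv ℝ G (t + θ * I) 1 :=
    hcont'.comp_continuous (f := fun θ : ℝ ↦ (t, θ)) (by fun_prop) fun θ ↦ ⟨ht, mem_univ θ⟩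
  obtain ⟨C, hC⟩ := ((isCompact_closedBall t δ).prod isCompact_uIcc).exists_bound_of_continuousOn
    (hcont'.mono (prod_mono hball (subset_univ (uIcc a b))))
  refine (intervalIntegral.hasDerivAt_integral_of_dominated_loc_of_deriv_le
    (F := fun (s θ : ℝ) ↦ G (s + θ * I)) (F' := fun (s θ : ℝ) ↦ fderiv ℝ G (s + θ * I) 1)
    (bound := fun _ ↦ C) (closedBall_mem_nhds t hδ) ?_ ((hcont t ht).intervalIntegrable _ _)
    hderiv.aestronglyMeasurable ?_ (by simp) ?_).2
  · filter_upwards [hU.mem_nhds ht] with s hs using (hcont s hs).aestronglyMeasurable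
  · exact Eventually.of_forall fun θ hθ s hs ↦ hC (s, θ) ⟨hs, uIoc_subset_uIcc hθ⟩
  · refine Eventually.of_forall fun θ _ s hs ↦ ?_
    have hγ : HasDerivAt (fun s : ℝ ↦ (s + θ * I : ℂ)) 1 s :=
      (Complex.ofRealCLM.hasDerivAt).add_const _
    exact ((hline s θ (hball hs)).differentiableAt one_ne_zero).hasFDerivAt.comp_hasDerivAt s hγ

lemma continuous_fderiv_fderiv_vertical {E : Type*} [NormedAddCommGroup E] [NormedSpace ℝ E]
    {G : ℂ → E} {t : ℝ}
    (hG : ∀ θ : ℝ, ContDiffAt ℝ 2 G (t + θ * I)) (v w : ℂ) :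
    Continuous fun θ : ℝ ↦ fderiv ℝ (fderiv ℝ G) (t + θ * I) v w :=
  continuous_iff_continuousAt.2 fun θ ↦
    (((((hG θ).fderiv_right (m := 1) le_rfl).fderiv_right (m := 0) le_rfl).continuousAt.comp
      (f := fun θ : ℝ ↦ (t + θ * I : ℂ)) (by fun_prop)).clm_apply
        continuousAt_const).clm_apply continuousAt_const

lemma integral_fderiv_fderiv_I_of_periodic {E : Type*} [NormedAddCommGroup E] [NormedSpace ℝ E]
    [CompleteSpace E] {G : ℂ → E} {t p : ℝ} (hp : Function.Periodic G (p * I))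
    (hG : ∀ θ : ℝ, ContDiffAt ℝ 2 G (t + θ * I)) :
    ∫ θ in (0 : ℝ)..p, fderiv ℝ (fderiv ℝ G) (t + θ * I) I I = 0 := by
  have hline (θ : ℝ) : HasDerivAt (fun θ : ℝ ↦ (t + θ * I : ℂ)) I θ := by
    simpa using (Complex.ofRealCLM.hasDerivAt.mul_const I).const_add (t : ℂ)
  have hG' (θ : ℝ) : ContDiffAt ℝ 1 (fderiv ℝ G) (t + θ * I) :=
    (hG θ).fderiv_right le_rfl
  have hperiod : fderiv ℝ G (t + p * I) = fderiv ℝ G t := by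
    rw [← fderiv_comp_add_right, funext hp]
  have hderiv (θ : ℝ) : HasDerivAt (fun θ : ℝ ↦ fderiv ℝ G (t + θ * I) I)
      (fderiv ℝ (fderiv ℝ G) (t + θ * I) I I) θ := by
    have h : HasDerivAt (fun θ : ℝ ↦ fderiv ℝ G (t + θ * I))
        (fderiv ℝ (fderiv ℝ G) (t + θ * I) I) θ :=
      ((hG' θ).differentiableAt one_ne_zero).hasFDerivAt.comp_hasDerivAt θ (hline θ)
    simpa using h.clm_apply (hasDerivAt_const θ I)
  rw [intervalIntegral.integral_eq_sub_of_hasDerivAt (fun θ _ ↦ hderiv θ)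
    ((continuous_fderiv_fderiv_vertical hG I I).intervalIntegrable _ _)]
  simp [hperiod]

lemma convexOn_integral_vertical_of_periodic {U : Set ℝ} (hU : IsOpen U) (hUc : Convex ℝ U)
    {G : ℂ → ℝ} {p : ℝ} (hp0 : 0 ≤ p) (hp : Function.Periodic G (p * I))
    (hG : ∀ z, z.re ∈ U → ContDiffAt ℝ 2 G z) (hΔ : ∀ z, z.re ∈ U → 0 ≤ Δ G z) :
    ConvexOn ℝ U fun t : ℝ ↦ ∫ θ in (0 : ℝ)..p, G (t + θ * I) := by
  have hG' (z : ℂ) (hz : z.re ∈ U) : ContDiffAt ℝ 1 (fun w ↦ fderiv ℝ G w 1) z :=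
    ((hG z hz).fderiv_right le_rfl).clm_apply contDiffAt_const
  have hderiv1 {t : ℝ} (ht : t ∈ U) :=
    hasDerivAt_integral_vertical hU (fun z hz ↦ (hG z hz).of_le one_le_two) 0 p ht
  have hderiv2 {t : ℝ} (ht : t ∈ U) := hasDerivAt_integral_vertical hU hG' 0 p ht
  refine convexOn_of_hasDerivWithinAt2_nonneg hUc
    (fun t ht ↦ (hderiv1 ht).continuousAt.continuousWithinAt)
    (fun t ht ↦ (hderiv1 (interior_subset ht)).hasDerivWithinAt)
    (fun t ht ↦ (hderiv2 (interior_subset ht)).hasDerivWithinAt) fun t ht ↦ ?_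
  have htU : t ∈ U := interior_subset ht
  have hline (θ : ℝ) : ContDiffAt ℝ 2 G (t + θ * I) := hG _ (by simpa using htU)
  have hone (θ : ℝ) : fderiv ℝ (fun w ↦ fderiv ℝ G w 1) (t + θ * I) 1 =
      fderiv ℝ (fderiv ℝ G) (t + θ * I) 1 1 := by
    rw [fderiv_clm_apply (((hline θ).fderiv_right (m := 1) le_rfl).differentiableAt one_ne_zero)
      (differentiableAt_const _)]
    simp
  calc (0 : ℝ) ≤ ∫ θ in (0 : ℝ)..p, Δ G (t + θ * I) :=
        intervalIntegral.integral_nonneg hp0 fun θ _ ↦ hΔ _ (by simpa using htU)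
    _ = ∫ θ in (0 : ℝ)..p, (fderiv ℝ (fderiv ℝ G) (t + θ * I) 1 1 +
          fderiv ℝ (fderiv ℝ G) (t + θ * I) I I) := by
        simp [laplacian_eq_sum_fderiv_fderiv Complex.orthonormalBasisOneI]
    _ = _ := by
        rw [intervalIntegral.integral_add
          ((continuous_fderiv_fderiv_vertical hline 1 1).intervalIntegrable _ _)
          ((continuous_fderiv_fderiv_vertical hline I I).intervalIntegrable _ _),
          integral_fderiv_fderiv_I_of_periodic hp hline, add_zero]
        simp only [hone]

lemma le_of_convexOn_Iio_of_tendsto_atBot {M : ℝ → ℝ} {T L t : ℝ} (hM : ConvexOn ℝ (Iio T) M)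
    (hL : Tendsto M atBot (𝓝 L)) (ht : t < T) : L ≤ M t := by
  have hmono (r : ℝ) (hr : r < t) : M r ≤ M t := by
    have hweight : Tendsto (fun s ↦ (t - r) / (t - s)) atBot (𝓝 0) :=
      tendsto_const_nhds.div_atTop (tendsto_atTop_add_const_left atBot t tendsto_neg_atBot_atTop)
    have hlim : Tendsto (fun s ↦ (t - r) / (t - s) * M s + (1 - (t - r) / (t - s)) * M t) atBot
        (𝓝 (M t)) := by
      simpa using (hweight.mul hL).add ((hweight.const_sub 1).mul_const (M t))
    refine ge_of_tendsto hlim ?_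
    filter_upwards [eventually_lt_atBot r] with s hs
    have hpos : 0 < t - s := by linarith
    have h := hM.secant_mono_aux1 (mem_Iio.2 (hs.trans (hr.trans ht))) (mem_Iio.2 ht) hs hr
    field_simp
    linarith
  refine le_of_tendsto hL ?_
  filter_upwards [eventually_lt_atBot t] with s hs using hmono s hs

lemma continuousOn_of_contDiffAt_diff_singleton {E F : Type*} [NormedAddCommGroup E]
    [NormedSpace ℝ E] [NormedAddCommGroup F] [NormedSpace ℝ F] {n : WithTop ℕ∞} {f : E → F} {c : E}
    {s : Set E} (hc : ContinuousAt f c) (hf : ∀ z ∈ s \ {c}, ContDiffAt ℝ n f z) :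
    ContinuousOn f s := fun z hz ↦ by
  obtain rfl | hzc := eq_or_ne z c
  · exact hc.continuousWithinAt
  · exact (hf z ⟨hz, hzc⟩).continuousAt.continuousWithinAt

lemma continuousOn_circleAverage_Ico {f : ℂ → ℝ} {c : ℂ} {R : ℝ}
    (hf : ContinuousOn f (ball c R)) : ContinuousOn (Real.circleAverage f c) (Ico 0 R) :=
  Real.ContinuousOn.circleAverage
    (hf.mono fun _ hz ↦ mem_ball_iff_norm.2 hz.2) fun _ hs ↦ hs.1

/-- Under `z = c + exp w` circle averages become averages over vertical periods of a subharmonic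
function, which are convex in `log r` and converge as `log r → -∞`, hence are monotone. -/
lemma le_circleAverage_of_laplacian_nonneg {f : ℂ → ℝ} {c : ℂ} {r R : ℝ}
    (hc : ContinuousAt f c) (hf : ∀ z ∈ ball c R \ {c}, ContDiffAt ℝ 2 f z)
    (hΔ : ∀ z ∈ ball c R \ {c}, 0 ≤ Δ f z) (hr : 0 < r) (hrR : r < R) :
    f c ≤ Real.circleAverage f c r := by
  have hR : 0 < R := hr.trans hrR
  set G : ℂ → ℝ := fun z ↦ f (c + Complex.exp z)
  have hexp (z : ℂ) (hz : z.re ∈ Iio (Real.log R)) : c + Complex.exp z ∈ ball c R \ {c} := by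
    refine ⟨?_, by simp⟩
    simpa [Complex.norm_exp, Real.lt_log_iff_exp_lt hR] using hz
  have hperiodic : Function.Periodic G ((2 * π : ℝ) * I) := fun z ↦ by
    simp only [G, Complex.ofReal_mul, Complex.ofReal_ofNat, Complex.exp_periodic z]
  have hconv : ConvexOn ℝ (Iio (Real.log R)) fun t : ℝ ↦ ∫ θ in (0 : ℝ)..2 * π, G (t + θ * I) := by
    refine convexOn_integral_vertical_of_periodic isOpen_Iio (convex_Iio _) Real.two_pi_pos.le
      hperiodic (fun z hz ↦ ?_) fun z hz ↦ ?_
    · exact (hf _ (hexp z hz)).comp z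
        (contDiff_const.add (Complex.contDiff_exp (𝕜 := ℝ))).contDiffAt
    · rw [laplacian_comp_holomorphic (φ := fun z ↦ c + Complex.exp z) (hf _ (hexp z hz))
        (contDiff_const.add Complex.contDiff_exp).contDiffAt]
      exact mul_nonneg (sq_nonneg _) (hΔ _ (hexp z hz))
  have hint (t : ℝ) : ∫ θ in (0 : ℝ)..2 * π, G (t + θ * I) =
      2 * π * Real.circleAverage f c (Real.exp t) := by
    simp only [Real.circleAverage, circleMap, G, Complex.exp_add, Complex.ofReal_exp, smul_eq_mul]
    rw [mul_inv_cancel_left₀ Real.two_pi_pos.ne']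
  have hcont : ContinuousOn (Real.circleAverage f c) (Ico 0 R) :=
    continuousOn_circleAverage_Ico (continuousOn_of_contDiffAt_diff_singleton hc hf)
  have hlim : Tendsto (fun t : ℝ ↦ ∫ θ in (0 : ℝ)..2 * π, G (t + θ * I)) atBot
      (𝓝 (2 * π * f c)) := by
    simp only [hint]
    have h0 := hcont 0 ⟨le_rfl, hR⟩
    rw [ContinuousWithinAt, Real.circleAverage_zero] at h0
    refine (h0.comp (tendsto_nhdsWithin_iff.2 ⟨Real.tendsto_exp_atBot, ?_⟩)).const_mul (2 * π)
    filter_upwards [eventually_lt_atBot (Real.log R)] with t ht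
    exact ⟨(Real.exp_pos t).le, (Real.lt_log_iff_exp_lt hR).1 ht⟩
  have h := le_of_convexOn_Iio_of_tendsto_atBot hconv hlim (Real.log_lt_log hr hrR)
  rw [hint, Real.exp_log hr] at h
  exact le_of_mul_le_mul_left h Real.two_pi_pos

lemma setIntegral_ball_eq_setIntegral_circleMap {E : Type*} [NormedAddCommGroup E]
    [NormedSpace ℝ E] (f : ℂ → E) (c : ℂ) (r : ℝ) :
    ∫ z in ball c r, f z =
      ∫ p in Ioo 0 r ×ˢ Ioo (-π) π, p.1 • f (circleMap c p.1 p.2) := by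
  have hpolar : EqOn
      (fun p : ℝ × ℝ ↦ p.1 • (ball c r).indicator f (c + Complex.polarCoord.symm p))
      ((Ioo 0 r ×ˢ Ioo (-π) π).indicator fun p ↦ p.1 • f (circleMap c p.1 p.2))
      (Ioi 0 ×ˢ Ioo (-π) π) := by
    rintro ⟨s, θ⟩ ⟨hs : 0 < s, hθ⟩
    have hz : c + Complex.polarCoord.symm (s, θ) = circleMap c s θ := by
      simp [circleMap, Complex.exp_mul_I]
    have hmem : circleMap c s θ ∈ ball c r ↔ (s, θ) ∈ Ioo 0 r ×ˢ Ioo (-π) π := by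
      simp_all [dist_eq_norm, abs_of_pos hs]
    simp only [hz, indicator, hmem, smul_ite, smul_zero]
  calc ∫ z in ball c r, f z
      = ∫ z, (ball c r).indicator f (c + z) := by
        rw [← integral_indicator measurableSet_ball, integral_add_left_eq_self]
    _ = ∫ p in Ioi 0 ×ˢ Ioo (-π) π,
          (Ioo 0 r ×ˢ Ioo (-π) π).indicator (fun p ↦ p.1 • f (circleMap c p.1 p.2)) p := by
        rw [← Complex.integral_comp_polarCoord_symm]
        exact setIntegral_congr_fun (measurableSet_Ioi.prod measurableSet_Ioo) hpolar
    _ = ∫ p in Ioo 0 r ×ˢ Ioo (-π) π, p.1 • f (circleMap c p.1 p.2) := by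
        rw [setIntegral_indicator (measurableSet_Ioo.prod measurableSet_Ioo),
          inter_eq_right.2 (prod_mono_left Ioo_subset_Ioi_self)]

lemma setIntegral_ball_eq_integral_circleAverage {f : ℂ → ℝ} {c : ℂ} {r : ℝ} (hr : 0 ≤ r)
    (hf : ContinuousOn f (closedBall c r)) :
    ∫ z in ball c r, f z = ∫ s in (0 : ℝ)..r, 2 * π * s * Real.circleAverage f c s := by
  have hint : IntegrableOn (fun p : ℝ × ℝ ↦ p.1 * f (circleMap c p.1 p.2))
      (Ioo 0 r ×ˢ Ioo (-π) π) (volume.prod volume) := by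
    refine ContinuousOn.integrableOn_compact (isCompact_Icc.prod isCompact_Icc) ?_ |>.mono_set
      (prod_mono Ioo_subset_Icc_self (Ioo_subset_Icc_self (a := -π) (b := π)))
    refine continuousOn_fst.mul (hf.comp (by fun_prop) fun p hp ↦ ?_)
    simpa [dist_eq_norm, abs_of_nonneg hp.1.1] using hp.1.2
  calc ∫ z in ball c r, f z
      = ∫ s in Ioo 0 r, ∫ θ in Ioo (-π) π, s * f (circleMap c s θ) := by
        rw [setIntegral_ball_eq_setIntegral_circleMap]
        exact setIntegral_prod _ hint
    _ = ∫ s in (0 : ℝ)..r, 2 * π * s * Real.circleAverage f c s := by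
        rw [intervalIntegral.integral_of_le hr, integral_Ioc_eq_integral_Ioo]
        refine setIntegral_congr_fun measurableSet_Ioo fun s _ ↦ ?_
        rw [integral_const_mul, Real.circleAverage_eq_integral_add (-π),
          intervalIntegral.integral_comp_add_right (fun θ ↦ f (circleMap c s θ)),
          intervalIntegral.integral_of_le (by linarith [Real.pi_pos]), integral_Ioc_eq_integral_Ioo,
          smul_eq_mul]
        ring_nf
        field_simp

lemma mul_le_setIntegral_ball_of_laplacian_nonneg {f : ℂ → ℝ} {c : ℂ} {r R : ℝ}
    (hc : ContinuousAt f c) (hf : ∀ z ∈ ball c R \ {c}, ContDiffAt ℝ 2 f z)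
    (hΔ : ∀ z ∈ ball c R \ {c}, 0 ≤ Δ f z) (hr : 0 < r) (hrR : r < R) :
    π * r ^ 2 * f c ≤ ∫ z in ball c r, f z := by
  have hcont : ContinuousOn f (ball c R) := continuousOn_of_contDiffAt_diff_singleton hc hf
  have havg : ContinuousOn (Real.circleAverage f c) (uIcc 0 r) :=
    (continuousOn_circleAverage_Ico hcont).mono (by grind [uIcc_of_le])
  calc π * r ^ 2 * f c = ∫ s in (0 : ℝ)..r, 2 * π * s * f c := by
        rw [intervalIntegral.integral_mul_const, intervalIntegral.integral_const_mul, integral_id]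
        ring
    _ ≤ ∫ s in (0 : ℝ)..r, 2 * π * s * Real.circleAverage f c s := by
        refine intervalIntegral.integral_mono_on_of_le_Ioo hr.le
          (Continuous.intervalIntegrable (by fun_prop) _ _)
          (ContinuousOn.intervalIntegrable (by fun_prop)) fun s hs ↦ ?_
        have hs0 : 0 < s := hs.1
        gcongr
        exact le_circleAverage_of_laplacian_nonneg hc hf hΔ hs0 (hs.2.trans hrR)
    _ = ∫ z in ball c r, f z :=
        (setIntegral_ball_eq_integral_circleAverage hr.le
          (hcont.mono (closedBall_subset_ball hrR))).symm

lemma eventually_eq_zero_of_laplacian_nonpos {f : ℂ → ℝ} {c : ℂ}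
    (hc : ContinuousAt f c) (hf : ∀ᶠ z in 𝓝[≠] c, ContDiffAt ℝ 2 f z)
    (hΔ : ∀ᶠ z in 𝓝[≠] c, Δ f z ≤ 0) (hnonneg : ∀ᶠ z in 𝓝 c, 0 ≤ f z) (h0 : f c = 0) :
    ∀ᶠ z in 𝓝 c, f z = 0 := by
  rw [eventually_nhdsWithin_iff] at hf hΔ
  obtain ⟨ρ, hρ, hball⟩ := Metric.eventually_nhds_iff_ball.1 (hf.and (hΔ.and hnonneg))
  have hcont : ContinuousOn f (ball c ρ) :=
    continuousOn_of_contDiffAt_diff_singleton hc fun z hz ↦ (hball z hz.1).1 hz.2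
  filter_upwards [ball_mem_nhds c hρ] with z hz
  obtain rfl | hzc := eq_or_ne z c
  · exact h0
  set s := ‖z - c‖
  have hs : 0 < s := norm_sub_pos_iff.2 hzc
  have hsρ : s < ρ := mem_ball_iff_norm.1 hz
  have hcircle (θ : ℝ) : circleMap c s θ ∈ ball c ρ := by
    simpa [dist_eq_norm, abs_of_pos hs] using hsρ
  have havg : Real.circleAverage f c s ≤ 0 := by
    have h := le_circleAverage_of_laplacian_nonneg (f := -f) (R := ρ) hc.neg
      (fun w hw ↦ ((hball w hw.1).1 hw.2).neg)
      (fun w hw ↦ by simpa [laplacian_neg] using (hball w hw.1).2.1 hw.2) hs hsρ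
    simpa [Real.circleAverage, h0] using h
  by_contra hne
  obtain ⟨θ, hθ, hθz⟩ : z ∈ circleMap c s '' Ioc 0 (2 * π) := by
    rw [image_circleMap_Ioc, abs_of_pos hs]
    exact mem_sphere_iff_norm.2 rfl
  have hint : 0 < ∫ θ in (0 : ℝ)..2 * π, f (circleMap c s θ) :=
    intervalIntegral.integral_pos Real.two_pi_pos
      (hcont.comp (continuous_circleMap c s).continuousOn fun θ _ ↦ hcircle θ)
      (fun θ _ ↦ (hball _ (hcircle θ)).2.2)
      ⟨θ, Ioc_subset_Icc_self hθ, hθz ▸ (hball z hz).2.2.lt_of_ne' hne⟩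
  exact havg.not_gt (mul_pos (inv_pos.2 Real.two_pi_pos) hint)

end MeanValue

/-! ### `ε`-regularity -/

section EpsilonRegularity

lemma volume_real_ball (c : ℂ) {r : ℝ} (hr : 0 ≤ r) : volume.real (ball c r) = π * r ^ 2 := by
  simp [measureReal_def, hr, mul_comm]

lemma mul_le_setIntegral_ball_add_of_neg_le_laplacian {f : ℂ → ℝ} {c : ℂ} {r R M : ℝ} (hM : 0 ≤ M)
    (hf : ∀ z ∈ ball c R, ContDiffAt ℝ 2 f z) (hΔ : ∀ z ∈ ball c R, -M ≤ Δ f z)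
    (hr : 0 < r) (hrR : r < R) :
    π * r ^ 2 * f c ≤ (∫ z in ball c r, f z) + π * r ^ 2 * (M / 4 * r ^ 2) := by
  have hq (z : ℂ) : ContDiffAt ℝ 2 (fun w ↦ M / 4 * ‖-c + w‖ ^ 2) z :=
    contDiffAt_const.mul ((contDiff_const.add contDiff_id).norm_sq ℝ).contDiffAt
  have hΔq (z : ℂ) : Δ (fun w ↦ M / 4 * ‖-c + w‖ ^ 2 : ℂ → ℝ) z = M := by
    rw [laplacian_comp_add_left (fun w ↦ M / 4 * ‖w‖ ^ 2),
      laplacian_const_mul _ (contDiff_norm_sq ℝ).contDiffAt, laplacian_norm_sq,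
      Complex.finrank_real_complex, Nat.cast_ofNat]
    ring
  have hf_int : IntegrableOn f (ball c r) :=
    (ContinuousOn.integrableOn_compact (isCompact_closedBall c r) fun z hz ↦
      (hf z (closedBall_subset_ball hrR hz)).continuousAt.continuousWithinAt).mono_set
        ball_subset_closedBall
  have hq_int : IntegrableOn (fun z ↦ M / 4 * ‖-c + z‖ ^ 2) (ball c r) :=
    (Continuous.continuousOn (by fun_prop)).integrableOn_compact (isCompact_closedBall c r)
      |>.mono_set ball_subset_closedBall
  have hmean := mul_le_setIntegral_ball_of_laplacian_nonneg (c := c) (R := R)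
    (f := fun z ↦ f z + M / 4 * ‖-c + z‖ ^ 2)
    ((hf c (mem_ball_self (hr.trans hrR))).add (hq c)).continuousAt
    (fun z hz ↦ (hf z hz.1).add (hq z)) (fun z hz ↦ by
      have h : Δ (fun z ↦ f z + M / 4 * ‖-c + z‖ ^ 2 : ℂ → ℝ) z = Δ f z + M :=
        ((hf z hz.1).laplacian_add (hq z)).trans (by rw [hΔq z])
      linarith [hΔ z hz.1]) hr hrR
  rw [integral_add hf_int hq_int] at hmean
  have hbound : ∫ z in ball c r, M / 4 * ‖-c + z‖ ^ 2 ≤ π * r ^ 2 * (M / 4 * r ^ 2) := by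
    rw [← volume_real_ball c hr.le, ← smul_eq_mul, ← setIntegral_const]
    refine setIntegral_mono_on hq_int (integrableOn_const measure_ball_lt_top.ne)
      measurableSet_ball fun z hz ↦ ?_
    have : ‖-c + z‖ ≤ r := by rw [neg_add_eq_sub]; exact (mem_ball_iff_norm.1 hz).le
    gcongr
  simp only [neg_add_cancel, norm_zero, ne_eq, OfNat.ofNat_ne_zero, not_false_eq_true, zero_pow,
    mul_zero, add_zero] at hmean
  linarith

/-- Schoen's point-picking trick: maximise `(ρ - dist z c) ^ 2 * F z`. -/
lemma exists_closedBall_forall_le_four_mul {X : Type*} [PseudoMetricSpace X]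
    [ProperSpace X] {F : X → ℝ} {c : X} {ρ κ : ℝ} (hρ : 0 ≤ ρ) (hκ : 0 ≤ κ)
    (hF : ContinuousOn F (closedBall c ρ)) (hF0 : ∀ z ∈ closedBall c ρ, 0 ≤ F z)
    (hc : κ < ρ ^ 2 * F c) :
    ∃ w σ, 0 < σ ∧ 0 < F w ∧ closedBall w σ ⊆ closedBall c ρ ∧ κ < 4 * σ ^ 2 * F w ∧
      ∀ z ∈ closedBall w σ, F z ≤ 4 * F w := by
  obtain ⟨w, hw, hmax⟩ := (isCompact_closedBall c ρ).exists_isMaxOn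
    (f := fun z ↦ (ρ - dist z c) ^ 2 * F z) ⟨c, mem_closedBall_self hρ⟩ (by fun_prop)
  obtain ⟨σ, hσ⟩ : ∃ σ, 2 * σ = ρ - dist w c := ⟨(ρ - dist w c) / 2, by ring⟩
  have hwσ : κ < (2 * σ) ^ 2 * F w := by
    simpa [hσ] using hc.trans_le (by simpa using hmax (mem_closedBall_self hρ))
  have hσ0 : 0 < σ := by
    refine lt_of_le_of_ne (by linarith [mem_closedBall.1 hw]) ?_
    rintro rfl
    simp at hwσ
    linarith
  have hFw : 0 < F w := pos_of_mul_pos_right (hκ.trans_lt hwσ) (sq_nonneg _)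
  have hsub (z : X) (hz : z ∈ closedBall w σ) : dist z c ≤ ρ - σ := by
    linarith [dist_triangle z w c, mem_closedBall.1 hz]
  have hball : closedBall w σ ⊆ closedBall c ρ := fun z hz ↦
    mem_closedBall.2 (by linarith [hsub z hz])
  refine ⟨w, σ, hσ0, hFw, hball, by linarith, fun z hz ↦ ?_⟩
  have hz' : (ρ - dist z c) ^ 2 * F z ≤ (2 * σ) ^ 2 * F w := by
    simpa [hσ] using hmax (hball hz)
  have hle : σ ^ 2 * F z ≤ (ρ - dist z c) ^ 2 * F z :=
    mul_le_mul_of_nonneg_right (pow_le_pow_left₀ hσ0.le (by linarith [hsub z hz]) 2)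
      (hF0 z (hball hz))
  refine le_of_mul_le_mul_left ?_ (pow_pos hσ0 2)
  linarith

lemma mul_le_two_mul_setIntegral_ball_of_le_four_mul {F : ℂ → ℝ} {w : ℂ} {K r σ : ℝ} (hK : 0 ≤ K)
    (hF : ∀ z ∈ ball w σ, ContDiffAt ℝ 2 F z) (hF0 : ∀ z ∈ ball w σ, 0 ≤ F z)
    (hΔ : ∀ z ∈ ball w σ, -(K * F z ^ 2) ≤ Δ F z) (hle : ∀ z ∈ ball w σ, F z ≤ 4 * F w)
    (hr : 0 < r) (hrσ : r < σ) (hsmall : 8 * K * (r ^ 2 * F w) ≤ 1) :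
    π * r ^ 2 * F w ≤ 2 * ∫ z in ball w r, F z := by
  have hFw : 0 ≤ F w := hF0 w (mem_ball_self (hr.trans hrσ))
  have hmean := mul_le_setIntegral_ball_add_of_neg_le_laplacian (M := K * (4 * F w) ^ 2)
    (by positivity) hF (fun z hz ↦ by
      refine le_trans (neg_le_neg ?_) (hΔ z hz)
      have := hle z hz
      have := hF0 z hz
      gcongr) hr hrσ
  have herror : π * r ^ 2 * (K * (4 * F w) ^ 2 / 4 * r ^ 2) ≤ π * r ^ 2 * F w / 2 := by
    calc π * r ^ 2 * (K * (4 * F w) ^ 2 / 4 * r ^ 2)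
        = π * r ^ 2 * F w / 2 * (8 * K * (r ^ 2 * F w)) := by ring
      _ ≤ π * r ^ 2 * F w / 2 := mul_le_of_le_one_right (by positivity) hsmall
  linarith

/-- An `ε`-regularity theorem: if `ρ ^ 2 * F c` were large, the mean value inequality on the ball of
radius `√(τ / F w)` around a picked point `w` would force the integral of `F` to exceed `τ`. -/
lemma exists_sq_mul_le_of_setIntegral_le {K κ : ℝ} (hK : 0 ≤ K) (hκ : 0 < κ) :
    ∃ ε > 0, ∀ (F : ℂ → ℝ) (c : ℂ) (ρ : ℝ), 0 < ρ →
      (∀ z ∈ closedBall c ρ, ContDiffAt ℝ 2 F z) → (∀ z ∈ closedBall c ρ, 0 ≤ F z) →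
      (∀ z ∈ closedBall c ρ, -(K * F z ^ 2) ≤ Δ F z) →
      ∫ z in ball c ρ, F z ≤ ε → ρ ^ 2 * F c ≤ κ := by
  obtain ⟨τ, hτ, hτκ, hτK⟩ : ∃ τ > 0, 4 * τ ≤ κ ∧ 8 * K * τ ≤ 1 := by
    refine ⟨min (κ / 4) (1 / (8 * K + 8)), lt_min (by positivity) (by positivity), ?_, ?_⟩
    · linarith [min_le_left (κ / 4) (1 / (8 * K + 8))]
    · have h := min_le_right (κ / 4) (1 / (8 * K + 8))
      rw [le_div_iff₀ (by positivity)] at h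
      nlinarith [lt_min (show 0 < κ / 4 by positivity) (show 0 < 1 / (8 * K + 8) by positivity)]
  refine ⟨τ, hτ, fun F c ρ hρ hF hF0 hΔ hint ↦ ?_⟩
  by_contra! hc
  have hFcont : ContinuousOn F (closedBall c ρ) := fun z hz ↦
    (hF z hz).continuousAt.continuousWithinAt
  obtain ⟨w, σ, hσ, hFw, hball, hwσ, hle⟩ :=
    exists_closedBall_forall_le_four_mul hρ.le hκ.le hFcont hF0 hc
  set r := √(τ / F w)
  have hr : 0 < r := Real.sqrt_pos.2 (by positivity)
  have hrF : r ^ 2 * F w = τ := by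
    rw [Real.sq_sqrt (by positivity)]
    field_simp
  have hrσ : r < σ := by
    refine lt_of_pow_lt_pow_left₀ 2 hσ.le (lt_of_mul_lt_mul_right ?_ hFw.le)
    linarith
  have hsub {z : ℂ} (hz : z ∈ ball w σ) : z ∈ closedBall c ρ := hball (ball_subset_closedBall hz)
  have hmean := mul_le_two_mul_setIntegral_ball_of_le_four_mul hK (fun z hz ↦ hF z (hsub hz))
    (fun z hz ↦ hF0 z (hsub hz)) (fun z hz ↦ hΔ z (hsub hz))
    (fun z hz ↦ hle z (ball_subset_closedBall hz)) hr hrσ (by rwa [hrF])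
  have hint' : ∫ z in ball w r, F z ≤ τ := by
    refine le_trans (setIntegral_mono_set ?_ ?_ ?_) hint
    · exact (hFcont.integrableOn_compact (isCompact_closedBall c ρ)).mono_set
        ball_subset_closedBall
    · filter_upwards [ae_restrict_mem measurableSet_ball] with z hz
        using hF0 z (ball_subset_closedBall hz)
    · rw [← interior_closedBall c hρ.ne']
      exact (interior_maximal ((ball_subset_ball hrσ.le).trans fun z ↦ hsub)
        isOpen_ball).eventuallyLE
  rw [mul_assoc, hrF] at hmean
  have := mul_lt_mul_of_pos_right Real.pi_gt_three hτ
  linarith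

end EpsilonRegularity

/-! ### Growth of functions with controlled Laplacian -/

section Growth

lemma contDiffAt_norm_rpow {E : Type*} [NormedAddCommGroup E] [InnerProductSpace ℝ E] {x : E}
    (hx : x ≠ 0) (e : ℝ) : ContDiffAt ℝ 2 (fun y : E ↦ ‖y‖ ^ e) x :=
  (contDiffAt_norm ℝ hx).rpow_const_of_ne (norm_ne_zero_iff.2 hx)

variable {w : ℂ → ℝ} {C ε : ℝ}

lemma setIntegral_ball_le_of_laplacian_le_rpow (hε : 0 < ε) (hC : 0 ≤ C) (hw : Continuous w)
    (hw2 : ∀ z ≠ 0, ContDiffAt ℝ 2 w z) (hΔ : ∀ z ≠ 0, Δ w z ≤ C * ‖z‖ ^ (ε - 2)) {r : ℝ}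
    (hr : 0 < r) :
    ∫ z in ball 0 r, w z ≤ π * r ^ 2 * (w 0 + C / ε ^ 2 * r ^ ε) := by
  set P := C / ε ^ 2
  have hpow : Continuous fun z : ℂ ↦ P * ‖z‖ ^ ε :=
    continuous_const.mul (continuous_norm.rpow_const fun _ ↦ Or.inr hε.le)
  have hpow2 {z : ℂ} (hz : z ≠ 0) : ContDiffAt ℝ 2 (fun z : ℂ ↦ P * ‖z‖ ^ ε) z :=
    contDiffAt_const.mul (contDiffAt_norm_rpow hz ε)
  have hΔpow {z : ℂ} (hz : z ≠ 0) : Δ (fun z ↦ P * ‖z‖ ^ ε : ℂ → ℝ) z = C * ‖z‖ ^ (ε - 2) := by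
    rw [laplacian_const_mul _ (contDiffAt_norm_rpow hz ε), laplacian_norm_rpow hz,
      Complex.finrank_real_complex]
    simp only [P]
    field_simp
    simp
  have hint {f : ℂ → ℝ} (hf : Continuous f) : IntegrableOn f (ball 0 r) :=
    (hf.continuousOn.integrableOn_compact (isCompact_closedBall 0 r)).mono_set
      ball_subset_closedBall
  have hmean := mul_le_setIntegral_ball_of_laplacian_nonneg (c := 0) (R := r + 1)
    (f := fun z ↦ P * ‖z‖ ^ ε - w z) (hpow.sub hw).continuousAt
    (fun z hz ↦ (hpow2 hz.2).sub (hw2 z hz.2)) (fun z hz ↦ by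
      have h : Δ (fun z ↦ P * ‖z‖ ^ ε - w z : ℂ → ℝ) z = C * ‖z‖ ^ (ε - 2) - Δ w z :=
        ((hpow2 hz.2).laplacian_sub (hw2 z hz.2)).trans (by rw [hΔpow hz.2])
      linarith [hΔ z hz.2]) hr (lt_add_one r)
  rw [integral_sub (hint hpow) (hint hw)] at hmean
  have hbound : ∫ z in ball (0 : ℂ) r, P * ‖z‖ ^ ε ≤ π * r ^ 2 * (P * r ^ ε) := by
    rw [← volume_real_ball 0 hr.le, ← smul_eq_mul, ← setIntegral_const]
    refine setIntegral_mono_on (hint hpow) (integrableOn_const measure_ball_lt_top.ne)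
      measurableSet_ball fun z hz ↦ ?_
    have hzr : ‖z‖ ≤ r := (mem_ball_zero_iff.1 hz).le
    exact mul_le_mul_of_nonneg_left (Real.rpow_le_rpow (norm_nonneg z) hzr hε.le) (by positivity)
  rw [norm_zero, Real.zero_rpow hε.ne'] at hmean
  linarith

lemma le_of_laplacian_nonneg_of_laplacian_le_rpow (hε : 0 < ε) (hC : 0 ≤ C) (hw : Continuous w)
    (hw0 : 0 ≤ w) (hw2 : ∀ z ≠ 0, ContDiffAt ℝ 2 w z) (hΔ0 : ∀ z ≠ 0, 0 ≤ Δ w z)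
    (hΔ : ∀ z ≠ 0, Δ w z ≤ C * ‖z‖ ^ (ε - 2)) (z : ℂ) :
    w z ≤ 16 * (w 0 + C / ε ^ 2 * (2 * ‖z‖) ^ ε) := by
  obtain rfl | hz := eq_or_ne z 0
  · simp only [norm_zero, mul_zero, Real.zero_rpow hε.ne', add_zero]
    linarith [show 0 ≤ w 0 from hw0 0]
  have hz' : 0 < ‖z‖ := norm_pos_iff.2 hz
  have hne {y : ℂ} (hy : y ∈ ball z ‖z‖) : y ≠ 0 := by
    rintro rfl
    simp at hy
  have hsub : ball z (‖z‖ / 2) ⊆ ball 0 (2 * ‖z‖) :=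
    ball_subset_ball' (by rw [dist_zero_right]; linarith)
  refine le_of_mul_le_mul_left ?_ (show 0 < π * (‖z‖ / 2) ^ 2 by positivity)
  calc π * (‖z‖ / 2) ^ 2 * w z ≤ ∫ y in ball z (‖z‖ / 2), w y :=
        mul_le_setIntegral_ball_of_laplacian_nonneg hw.continuousAt
          (fun y hy ↦ hw2 y (hne hy.1)) (fun y hy ↦ hΔ0 y (hne hy.1)) (half_pos hz')
          (half_lt_self hz')
    _ ≤ ∫ y in ball 0 (2 * ‖z‖), w y :=
        setIntegral_mono_set ((hw.continuousOn.integrableOn_compact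
          (isCompact_closedBall 0 _)).mono_set ball_subset_closedBall)
          (Eventually.of_forall hw0) hsub.eventuallyLE
    _ ≤ π * (2 * ‖z‖) ^ 2 * (w 0 + C / ε ^ 2 * (2 * ‖z‖) ^ ε) :=
        setIntegral_ball_le_of_laplacian_le_rpow hε hC hw hw2 hΔ (by positivity)
    _ = π * (‖z‖ / 2) ^ 2 * (16 * (w 0 + C / ε ^ 2 * (2 * ‖z‖) ^ ε)) := by ring

lemma contDiffAt_norm_rpow_mul_exp {f : ℂ → ℝ} {z : ℂ} (hz : z ≠ 0) (b : ℝ)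
    (hf : ContDiffAt ℝ 2 f z) : ContDiffAt ℝ 2 (fun w ↦ ‖w‖ ^ b * Real.exp (f w)) z :=
  (contDiffAt_norm_rpow hz b).mul hf.exp

/-- The weight `‖z‖ ^ b` is the exponential of the harmonic function `b * log ‖z‖`. -/
lemma norm_rpow_mul_exp_mul_laplacian_le {f : ℂ → ℝ} {z : ℂ} (hz : z ≠ 0) (b : ℝ)
    (hf : ContDiffAt ℝ 2 f z) :
    ‖z‖ ^ b * Real.exp (f z) * Δ f z ≤ Δ (fun w ↦ ‖w‖ ^ b * Real.exp (f w)) z := by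
  have hlog : HarmonicAt (fun w : ℂ ↦ Real.log ‖w‖) z := analyticAt_id.harmonicAt_log_norm hz
  have hΔ : Δ (fun w ↦ b * Real.log ‖w‖ + f w) z = Δ f z :=
    ((contDiffAt_const.mul hlog.1).laplacian_add hf).trans <| by
      rw [laplacian_const_mul b hlog.1, hlog.2.self_of_nhds, Pi.zero_apply, mul_zero, zero_add]
  have hexp {w : ℂ} (hw : w ≠ 0) :
      ‖w‖ ^ b * Real.exp (f w) = Real.exp (b * Real.log ‖w‖ + f w) := by
    rw [Real.rpow_def_of_pos (norm_pos_iff.2 hw), ← Real.exp_add, mul_comm b]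
  have hcongr : (fun w ↦ ‖w‖ ^ b * Real.exp (f w)) =ᶠ[𝓝 z]
      fun w ↦ Real.exp (b * Real.log ‖w‖ + f w) :=
    (isOpen_ne.eventually_mem hz).mono fun w ↦ hexp
  rw [(laplacian_congr_nhds hcongr).self_of_nhds, hexp hz, ← hΔ]
  exact exp_mul_laplacian_le_laplacian_exp ((contDiffAt_const.mul hlog.1).add hf)

lemma tendsto_setIntegral_compl_ball {X E : Type*} [PseudoMetricSpace X] [MeasurableSpace X]
    [OpensMeasurableSpace X] [NormedAddCommGroup E] [NormedSpace ℝ E] {μ : Measure X} {f : X → E}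
    (hf : Integrable f μ) (c : X) :
    Tendsto (fun r ↦ ∫ x in (ball c r)ᶜ, f x ∂μ) atTop (𝓝 0) := by
  have h := tendsto_setIntegral_of_antitone (fun r ↦ (measurableSet_ball (x := c) (ε := r)).compl)
    (fun r s hrs ↦ compl_subset_compl.2 (ball_subset_ball hrs)) ⟨0, hf.integrableOn⟩
  have hcover : ⋃ r, ball c r = univ :=
    eq_univ_of_forall fun x ↦ mem_iUnion.2 ⟨dist x c + 1, lt_add_one (dist x c)⟩
  rwa [← compl_iUnion, hcover, compl_univ, setIntegral_empty] at h

end Growth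

/-! ### Decay and growth of solutions -/

section Solutions

variable {ι : Type*}

/-- The `j`-th energy density `|x|^{β_j} e^{u_j}` of the singular Liouville system, with the plane
identified with `ℂ`. -/
noncomputable def liouvilleDensity (β : ι → ℝ) (u : ι → ℂ → ℝ) (j : ι) (z : ℂ) : ℝ :=
  ‖z‖ ^ β j * Real.exp (u j z)

lemma liouvilleDensity_nonneg (β : ι → ℝ) (u : ι → ℂ → ℝ) (j : ι) (z : ℂ) :
    0 ≤ liouvilleDensity β u j z :=
  mul_nonneg (Real.rpow_nonneg (norm_nonneg z) _) (Real.exp_pos _).le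

variable [Fintype ι] {A : Matrix ι ι ℝ} {β : ι → ℝ} {u : ι → ℂ → ℝ}

/-- The right-hand side of the `i`-th equation `-Δ u_i = ∑ j, a_{ij} |x|^{β_j} e^{u_j}`. It is also
the sum of the zeroth-order coefficients of the linearised `i`-th equation, which is why it acts as
a potential in the moving plane argument. -/
noncomputable def liouvillePotential (A : Matrix ι ι ℝ) (β : ι → ℝ) (u : ι → ℂ → ℝ) (i : ι)
    (z : ℂ) : ℝ :=
  ∑ j, A i j * liouvilleDensity β u j z

/-- Finite-energy solutions of the singular Liouville system with coefficient matrix `A` and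
exponents `β`. They are continuous everywhere but solve the system classically only off the origin,
where the weights are singular. -/
structure IsLiouvilleSolution (A : Matrix ι ι ℝ) (β : ι → ℝ) (u : ι → ℂ → ℝ) : Prop where
  continuous : ∀ i, Continuous (u i)
  contDiffAt : ∀ i, ∀ z ≠ 0, ContDiffAt ℝ 2 (u i) z
  laplacian_eq : ∀ i, ∀ z ≠ 0, Δ (u i) z = -liouvillePotential A β u i z
  integrable : ∀ i, Integrable (liouvilleDensity β u i)

lemma liouvilleDensity_le_sum (β : ι → ℝ) (u : ι → ℂ → ℝ) (j : ι) (z : ℂ) :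
    liouvilleDensity β u j z ≤ ∑ k, liouvilleDensity β u k z :=
  Finset.single_le_sum (f := fun k ↦ liouvilleDensity β u k z)
    (fun k _ ↦ liouvilleDensity_nonneg β u k z) (Finset.mem_univ j)

lemma liouvillePotential_nonneg (hA : ∀ i j, 0 ≤ A i j) (β : ι → ℝ) (u : ι → ℂ → ℝ) (i : ι)
    (z : ℂ) : 0 ≤ liouvillePotential A β u i z :=
  Finset.sum_nonneg fun j _ ↦ mul_nonneg (hA i j) (liouvilleDensity_nonneg β u j z)

lemma liouvillePotential_le (hA : ∀ i j, 0 ≤ A i j) (β : ι → ℝ) (u : ι → ℂ → ℝ) (i : ι) (z : ℂ) :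
    liouvillePotential A β u i z ≤ (∑ i, ∑ j, A i j) * ∑ j, liouvilleDensity β u j z := by
  have hD : 0 ≤ ∑ j, liouvilleDensity β u j z :=
    Finset.sum_nonneg fun j _ ↦ liouvilleDensity_nonneg β u j z
  calc liouvillePotential A β u i z
    _ ≤ ∑ j, A i j * ∑ k, liouvilleDensity β u k z := by
        refine Finset.sum_le_sum fun j _ ↦ ?_
        exact mul_le_mul_of_nonneg_left (liouvilleDensity_le_sum β u j z) (hA i j)
    _ = (∑ j, A i j) * ∑ k, liouvilleDensity β u k z := (Finset.sum_mul ..).symm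
    _ ≤ (∑ i, ∑ j, A i j) * ∑ k, liouvilleDensity β u k z := by
        refine mul_le_mul_of_nonneg_right ?_ hD
        exact Finset.single_le_sum (f := fun i ↦ ∑ j, A i j)
          (fun i _ ↦ Finset.sum_nonneg fun j _ ↦ hA i j) (Finset.mem_univ i)

namespace IsLiouvilleSolution

lemma laplacian_nonpos (hu : IsLiouvilleSolution A β u) (hA : ∀ i j, 0 ≤ A i j) (i : ι) {z : ℂ}
    (hz : z ≠ 0) : Δ (u i) z ≤ 0 := by
  rw [hu.laplacian_eq i z hz, neg_nonpos]
  exact liouvillePotential_nonneg hA β u i z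

lemma neg_laplacian_le (hu : IsLiouvilleSolution A β u) (hA : ∀ i j, 0 ≤ A i j) (i : ι) {z : ℂ}
    (hz : z ≠ 0) :
    -Δ (u i) z ≤ (∑ i, ∑ j, A i j) * ∑ j, liouvilleDensity β u j z := by
  rw [hu.laplacian_eq i z hz, neg_neg]
  exact liouvillePotential_le hA β u i z

lemma neg_sum_mul_sq_le_laplacian_sum_liouvilleDensity (hu : IsLiouvilleSolution A β u)
    (hA : ∀ i j, 0 ≤ A i j) {z : ℂ} (hz : z ≠ 0) :
    -((∑ i, ∑ j, A i j) * (∑ j, liouvilleDensity β u j z) ^ 2) ≤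
      Δ (fun w ↦ ∑ j, liouvilleDensity β u j w) z := by
  have hC (j : ι) : ContDiffAt ℝ 2 (liouvilleDensity β u j) z :=
    contDiffAt_norm_rpow_mul_exp hz (β j) (hu.contDiffAt j z hz)
  rw [laplacian_sum _ fun j _ ↦ hC j, sq, ← mul_assoc, Finset.mul_sum, ← Finset.sum_neg_distrib]
  refine Finset.sum_le_sum fun i _ ↦ le_trans ?_
    (norm_rpow_mul_exp_mul_laplacian_le hz (β i) (hu.contDiffAt i z hz))
  have := mul_le_mul_of_nonneg_left (hu.neg_laplacian_le hA i hz) (liouvilleDensity_nonneg β u i z)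
  change _ ≤ liouvilleDensity β u i z * _
  linarith

lemma exists_sq_mul_sum_liouvilleDensity_le (hu : IsLiouvilleSolution A β u)
    (hA : ∀ i j, 0 ≤ A i j) {κ : ℝ} (hκ : 0 < κ) :
    ∃ R ≥ 1, ∀ z : ℂ, R ≤ ‖z‖ → ‖z‖ ^ 2 * ∑ j, liouvilleDensity β u j z ≤ κ := by
  obtain ⟨ε, hε, hreg⟩ := exists_sq_mul_le_of_setIntegral_le (K := ∑ i, ∑ j, A i j)
    (Finset.sum_nonneg fun i _ ↦ Finset.sum_nonneg fun j _ ↦ hA i j) (show 0 < κ / 4 by linarith)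
  have hD0 (z : ℂ) : 0 ≤ ∑ j, liouvilleDensity β u j z :=
    Finset.sum_nonneg fun j _ ↦ liouvilleDensity_nonneg β u j z
  have hint : Integrable fun z ↦ ∑ j, liouvilleDensity β u j z :=
    integrable_finsetSum _ fun j _ ↦ hu.integrable j
  obtain ⟨r, hr, hr1⟩ := (((tendsto_setIntegral_compl_ball hint 0).eventually_le_const hε).and
    (eventually_ge_atTop 1)).exists
  refine ⟨2 * r, by linarith, fun z hz ↦ ?_⟩
  have hfar {y : ℂ} (hy : y ∈ closedBall z (‖z‖ / 2)) : r ≤ ‖y‖ := by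
    have := norm_sub_norm_le z y
    linarith [mem_closedBall_iff_norm'.1 hy]
  have hne {y : ℂ} (hy : y ∈ closedBall z (‖z‖ / 2)) : y ≠ 0 :=
    norm_pos_iff.1 (by linarith [hfar hy])
  have hle : ∫ y in ball z (‖z‖ / 2), ∑ j, liouvilleDensity β u j y ≤ ε := by
    refine le_trans (setIntegral_mono_set hint.integrableOn (Eventually.of_forall hD0) ?_) hr
    refine LE.le.eventuallyLE fun y hy ↦ ?_
    simpa using hfar (ball_subset_closedBall hy)
  have := hreg (fun y ↦ ∑ j, liouvilleDensity β u j y) z (‖z‖ / 2) (by linarith)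
    (fun y hy ↦ ContDiffAt.sum fun j _ ↦
      contDiffAt_norm_rpow_mul_exp (hne hy) (β j) (hu.contDiffAt j y (hne hy)))
    (fun y _ ↦ hD0 y)
    (fun y hy ↦ hu.neg_sum_mul_sq_le_laplacian_sum_liouvilleDensity hA (hne hy)) hle
  linarith

lemma exists_forall_le_of_norm_le (hu : IsLiouvilleSolution A β u) (R : ℝ) :
    ∃ C, ∀ i, ∀ z : ℂ, ‖z‖ ≤ R → u i z ≤ C := by
  obtain ⟨C, hC⟩ := (isCompact_closedBall (0 : ℂ) R).exists_bound_of_continuousOn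
    (continuous_pi hu.continuous).continuousOn
  exact ⟨C, fun i z hz ↦ (Real.le_norm_self _).trans
    ((norm_le_pi_norm (fun i ↦ u i z) i).trans (hC z (mem_closedBall_zero_iff.2 hz)))⟩

lemma exists_forall_le (hu : IsLiouvilleSolution A β u) (hA : ∀ i j, 0 ≤ A i j)
    (hβ : ∀ i, -2 < β i) : ∃ C ≥ 0, ∀ i z, u i z ≤ C := by
  obtain ⟨R, hR, hdecay⟩ := hu.exists_sq_mul_sum_liouvilleDensity_le hA one_pos
  obtain ⟨C, hC⟩ := hu.exists_forall_le_of_norm_le R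
  refine ⟨max C 0, le_max_right _ _, fun i z ↦ ?_⟩
  obtain h | h := le_total ‖z‖ R
  · exact (hC i z h).trans (le_max_left _ _)
  refine le_trans (Real.exp_le_one_iff.1 ?_) (le_max_right _ _)
  have hz : 0 < ‖z‖ := by linarith
  calc Real.exp (u i z) ≤ ‖z‖ ^ (2 + β i) * Real.exp (u i z) :=
        le_mul_of_one_le_left (Real.exp_pos _).le
          (Real.one_le_rpow (by linarith) (by linarith [hβ i]))
    _ = ‖z‖ ^ 2 * liouvilleDensity β u i z := by
        rw [Real.rpow_add hz, Real.rpow_two, liouvilleDensity, mul_assoc]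
    _ ≤ ‖z‖ ^ 2 * ∑ j, liouvilleDensity β u j z := by
        gcongr
        exact liouvilleDensity_le_sum β u i z
    _ ≤ 1 := hdecay z h

lemma exists_sum_liouvilleDensity_le_rpow (hu : IsLiouvilleSolution A β u)
    (hA : ∀ i j, 0 ≤ A i j) {ε : ℝ} (hε : 0 ≤ ε) (hεβ : ∀ i, ε ≤ 2 + β i) :
    ∃ C ≥ 0, ∀ z ≠ 0, ∑ j, liouvilleDensity β u j z ≤ C * ‖z‖ ^ (ε - 2) := by
  obtain ⟨R, hR, hdecay⟩ := hu.exists_sq_mul_sum_liouvilleDensity_le hA one_pos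
  obtain ⟨M, hM⟩ := hu.exists_forall_le_of_norm_le R
  set C := ∑ j, R ^ (2 + β j - ε) * Real.exp M
  have hC : 0 ≤ C := by positivity
  refine ⟨C + 1, by linarith, fun z hz ↦ ?_⟩
  have hz' : 0 < ‖z‖ := norm_pos_iff.2 hz
  have hpow : 0 ≤ ‖z‖ ^ (ε - 2) := by positivity
  obtain h | h := le_total ‖z‖ R
  · refine le_trans ?_ (mul_le_mul_of_nonneg_right (le_add_of_nonneg_right zero_le_one) hpow)
    rw [Finset.sum_mul]
    gcongr with j
    calc liouvilleDensity β u j z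
        = ‖z‖ ^ (2 + β j - ε) * Real.exp (u j z) * ‖z‖ ^ (ε - 2) := by
          rw [liouvilleDensity, mul_right_comm, ← Real.rpow_add hz']
          ring_nf
      _ ≤ R ^ (2 + β j - ε) * Real.exp M * ‖z‖ ^ (ε - 2) := by
          have := hεβ j
          have := hM j z h
          gcongr
  · have hle : ∑ j, liouvilleDensity β u j z ≤ ‖z‖ ^ (ε - 2) := by
      rw [Real.rpow_sub hz', Real.rpow_two, le_div_iff₀' (by positivity)]
      exact (hdecay z h).trans (Real.one_le_rpow (hR.trans h) hε)
    exact hle.trans (le_mul_of_one_le_left hpow (le_add_of_nonneg_left hC))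

lemma exists_forall_abs_le_one_add_rpow (hu : IsLiouvilleSolution A β u) (hA : ∀ i j, 0 ≤ A i j)
    {ε : ℝ} (hε : 0 < ε) (hε1 : ε ≤ 1) (hεβ : ∀ i, ε ≤ 2 + β i) :
    ∃ C ≥ 0, ∀ i z, |u i z| ≤ C * (1 + ‖z‖ ^ ε) := by
  obtain ⟨C, hC, hdens⟩ := hu.exists_sum_liouvilleDensity_le_rpow hA hε.le hεβ
  obtain ⟨M, hM, hup⟩ := hu.exists_forall_le hA fun i ↦ by linarith [hεβ i]
  set K := ∑ i, ∑ j, A i j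
  have hK : 0 ≤ K := Finset.sum_nonneg fun i _ ↦ Finset.sum_nonneg fun j _ ↦ hA i j
  set S := ‖fun i ↦ u i 0‖
  set P := K * C / ε ^ 2
  have hP : 0 ≤ P := by positivity
  refine ⟨16 * (M + S) + 32 * P, by positivity, fun i z ↦ ?_⟩
  have hΔ {y : ℂ} (hy : y ≠ 0) : Δ (fun y ↦ M - u i y : ℂ → ℝ) y = -Δ (u i) y :=
    (contDiffAt_const.laplacian_sub (hu.contDiffAt i y hy)).trans (by simp)
  have hlow : M - u i z ≤ 16 * (M - u i 0 + P * (2 * ‖z‖) ^ ε) :=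
    le_of_laplacian_nonneg_of_laplacian_le_rpow (w := fun y ↦ M - u i y) hε (mul_nonneg hK hC)
      (continuous_const.sub (hu.continuous i))
      (fun y ↦ sub_nonneg.2 (hup i y)) (fun y hy ↦ contDiffAt_const.sub (hu.contDiffAt i y hy))
      (fun y hy ↦ by rw [hΔ hy]; exact neg_nonneg.2 (hu.laplacian_nonpos hA i hy))
      (fun y hy ↦ by
        rw [hΔ hy, mul_assoc]
        exact (hu.neg_laplacian_le hA i hy).trans (mul_le_mul_of_nonneg_left (hdens y hy) hK)) z
  have hpow : (2 * ‖z‖) ^ ε ≤ 2 * ‖z‖ ^ ε := by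
    rw [Real.mul_rpow zero_le_two (norm_nonneg z)]
    gcongr
    exact Real.rpow_le_self_of_one_le one_le_two hε1
  have hS : -u i 0 ≤ S := (neg_le_abs _).trans (norm_le_pi_norm (fun i ↦ u i 0) i)
  have hPpow := mul_le_mul_of_nonneg_left hpow hP
  have hS0 : 0 ≤ S := norm_nonneg _
  have hMS : 0 ≤ (M + S) * ‖z‖ ^ ε := by positivity
  have := hup i z
  rw [abs_le]
  constructor <;> nlinarith

lemma exists_rpow_lt_forall_abs_le (hu : IsLiouvilleSolution A β u) (hA : ∀ i j, 0 ≤ A i j)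
    (hβ : ∀ i, -2 < β i) {p : ℝ} (hp : 0 < p) :
    ∃ C ε : ℝ, 0 ≤ C ∧ 0 < ε ∧ ε < p ∧ ∀ i z, |u i z| ≤ C * (1 + ‖z‖ ^ ε) := by
  have hsmall : ∀ᶠ ε : ℝ in 𝓝 0, ε < p ∧ ε ≤ 1 ∧ ∀ i, ε ≤ 2 + β i :=
    (eventually_lt_nhds hp).and ((eventually_le_nhds one_pos).and
      (eventually_all.2 fun i ↦ eventually_le_nhds (by linarith [hβ i])))
  obtain ⟨ε, ⟨hεp, hε1, hεβ⟩, hε : 0 < ε⟩ :=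
    ((hsmall.filter_mono nhdsWithin_le_nhds).and (self_mem_nhdsWithin (s := Ioi 0))).exists
  obtain ⟨C, hC, hgrowth⟩ := hu.exists_forall_abs_le_one_add_rpow hA hε hε1 hεβ
  exact ⟨C, ε, hC, hε, hεp, hgrowth⟩

end IsLiouvilleSolution

end Solutions

/-! ### The barrier -/

section Barrier

lemma laplacian_comp_re {φ : ℝ → ℝ} {z : ℂ} (hφ : ContDiffAt ℝ 2 φ z.re) :
    Δ (fun w : ℂ ↦ φ w.re) z = deriv (deriv φ) z.re := by
  have hgrad : ∇ Complex.re z = 1 := by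
    refine (hasGradientAt_iff_hasFDerivAt.2 ?_).gradient
    have h : toDual ℝ ℂ 1 = Complex.reCLM := by
      ext v
      simp
    exact h ▸ Complex.reCLM.hasFDerivAt
  have hΔ : Δ Complex.re z = 0 :=
    (AnalyticAt.harmonicAt_re (f := id) analyticAt_id).2.self_of_nhds
  have := laplacian_real_comp (f := Complex.re) hφ Complex.reCLM.contDiff.contDiffAt
  simpa [hgrad, hΔ] using this

lemma sq_re_cpow_inv_two (w : ℂ) : (w ^ (2⁻¹ : ℂ)).re ^ 2 = (‖w‖ + w.re) / 2 := by
  rw [Complex.cpow_inv_two_re, Real.sq_sqrt]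
  linarith [neg_le_of_abs_le (Complex.abs_re_le_norm w)]

lemma re_cpow_inv_two_pos {w : ℂ} (hw : 0 < w.re) : 0 < (w ^ (2⁻¹ : ℂ)).re := by
  rw [Complex.cpow_inv_two_re, Real.sqrt_pos]
  linarith [norm_nonneg w]

lemma norm_sq_deriv_cpow_inv_two {w : ℂ} (hw : w ∈ Complex.slitPlane) :
    ‖deriv (fun w : ℂ ↦ w ^ (2⁻¹ : ℂ)) w‖ ^ 2 = (4 * ‖w‖)⁻¹ := by
  have hw0 := Complex.slitPlane_ne_zero hw
  have hsq : ‖w ^ (2⁻¹ : ℂ)‖ ^ 2 = ‖w‖ := by rw [← norm_pow, Complex.cpow_ofNat_inv_pow]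
  rw [Complex.deriv_cpow_const hw, Complex.cpow_sub _ _ hw0, Complex.cpow_one]
  simp only [norm_mul, norm_div, norm_inv, mul_pow, div_pow, hsq, Complex.norm_ofNat]
  field_simp
  norm_num

/-- The square root of the positive harmonic function `Re √(2 - z)`. On the left half-plane it is
superharmonic with `Δ q ≲ -q / ‖z‖²`, which is what absorbs the potential at infinity. -/
noncomputable def sqrtBarrier (z : ℂ) : ℝ :=
  ((2 - z) ^ (2⁻¹ : ℂ)).re ^ (2⁻¹ : ℝ)

variable {z : ℂ}

lemma two_le_re_two_sub (hz : z.re ≤ 0) : 2 ≤ (2 - z).re := by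
  simpa using hz

lemma two_sub_mem_slitPlane (hz : z.re ≤ 0) : 2 - z ∈ Complex.slitPlane :=
  Or.inl (two_pos.trans_le (two_le_re_two_sub hz))

lemma norm_le_norm_two_sub (hz : z.re ≤ 0) : ‖z‖ ≤ ‖2 - z‖ := by
  rw [← sq_le_sq₀ (norm_nonneg _) (norm_nonneg _), Complex.sq_norm, Complex.sq_norm,
    Complex.normSq_apply, Complex.normSq_apply]
  simp only [Complex.sub_re, Complex.sub_im, Complex.re_ofNat, Complex.im_ofNat]
  linarith

lemma sqrtBarrier_sq (z : ℂ) : sqrtBarrier z ^ 2 = ((2 - z) ^ (2⁻¹ : ℂ)).re := by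
  rw [sqrtBarrier, ← Real.rpow_mul_natCast, Nat.cast_ofNat, inv_mul_cancel₀ two_ne_zero,
    Real.rpow_one]
  rw [Complex.cpow_inv_two_re]
  positivity

lemma sqrtBarrier_pow_four (z : ℂ) : sqrtBarrier z ^ 4 = (‖2 - z‖ + (2 - z).re) / 2 := by
  rw [← sq_re_cpow_inv_two, ← sqrtBarrier_sq, ← pow_mul]

lemma sqrtBarrier_nonneg (z : ℂ) : 0 ≤ sqrtBarrier z := by
  refine Real.rpow_nonneg ?_ _
  rw [Complex.cpow_inv_two_re]
  positivity

lemma one_le_sqrtBarrier (hz : z.re ≤ 0) : 1 ≤ sqrtBarrier z := by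
  rw [← one_le_pow_iff_of_nonneg (sqrtBarrier_nonneg z) four_ne_zero, sqrtBarrier_pow_four]
  linarith [two_le_re_two_sub hz, norm_nonneg (2 - z)]

lemma sqrtBarrier_le (hz : z.re ≤ 0) : sqrtBarrier z ≤ ‖z‖ + 2 := by
  refine (le_self_pow₀ (one_le_sqrtBarrier hz) four_ne_zero).trans ?_
  rw [sqrtBarrier_pow_four]
  have h : ‖2 - z‖ ≤ 2 + ‖z‖ := by simpa using norm_sub_le 2 z
  linarith [Complex.re_le_norm (2 - z)]

lemma rpow_le_sqrtBarrier (hz : z.re ≤ 0) : (‖z‖ / 2) ^ (1 / 4 : ℝ) ≤ sqrtBarrier z := by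
  rw [← pow_le_pow_iff_left₀ (by positivity) (sqrtBarrier_nonneg z) four_ne_zero,
    sqrtBarrier_pow_four, ← Real.rpow_mul_natCast (by positivity)]
  norm_num
  linarith [norm_le_norm_two_sub hz]

lemma contDiffAt_two_sub_cpow (hz : z.re ≤ 0) :
    ContDiffAt ℂ 2 (fun w : ℂ ↦ (2 - w) ^ (2⁻¹ : ℂ)) z :=
  ((analyticAt_const.sub analyticAt_id).cpow analyticAt_const
    (two_sub_mem_slitPlane hz)).contDiffAt

lemma contDiffAt_sqrtBarrier (hz : z.re ≤ 0) : ContDiffAt ℝ 2 sqrtBarrier z :=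
  (Complex.reCLM.contDiff.contDiffAt.comp z ((contDiffAt_two_sub_cpow hz).restrict_scalars
    ℝ)).rpow_const_of_ne
      (re_cpow_inv_two_pos (two_pos.trans_le (two_le_re_two_sub hz))).ne'

lemma laplacian_sqrtBarrier_le (hz : z.re ≤ 0) :
    Δ sqrtBarrier z ≤ -(sqrtBarrier z / (16 * ‖2 - z‖ ^ 2)) := by
  set w := 2 - z
  set t := (w ^ (2⁻¹ : ℂ)).re
  have hw : 0 < w.re := two_pos.trans_le (two_le_re_two_sub hz)
  have hwn : 0 < ‖w‖ := hw.trans_le (Complex.re_le_norm w)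
  have ht : 0 < t := re_cpow_inv_two_pos hw
  have htw : t ^ 2 ≤ ‖w‖ := by
    rw [sq_re_cpow_inv_two]
    linarith [Complex.re_le_norm w]
  have hderiv : ‖deriv (fun w : ℂ ↦ (2 - w) ^ (2⁻¹ : ℂ)) z‖ ^ 2 = (4 * ‖w‖)⁻¹ := by
    rw [deriv_comp_const_sub (f := fun w : ℂ ↦ w ^ (2⁻¹ : ℂ)), norm_neg,
      norm_sq_deriv_cpow_inv_two (two_sub_mem_slitPlane hz)]
  have hpow : deriv (deriv fun s : ℝ ↦ s ^ (2⁻¹ : ℝ)) t = -(sqrtBarrier z / (4 * t ^ 2)) := by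
    rw [deriv_deriv_rpow_const, Real.rpow_sub ht, Real.rpow_two]
    change _ = -(t ^ (2⁻¹ : ℝ) / (4 * t ^ 2))
    ring
  have hroot : ContDiffAt ℝ 2 (fun s : ℝ ↦ s ^ (2⁻¹ : ℝ)) t :=
    Real.contDiffAt_rpow_const_of_ne ht.ne'
  have hΔ : Δ sqrtBarrier z = (4 * ‖w‖)⁻¹ * -(sqrtBarrier z / (4 * t ^ 2)) := by
    rw [← hderiv, ← hpow, ← laplacian_comp_re hroot]
    exact laplacian_comp_holomorphic (f := fun ζ ↦ ζ.re ^ (2⁻¹ : ℝ))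
      (hroot.comp (w ^ (2⁻¹ : ℂ)) Complex.reCLM.contDiff.contDiffAt) (contDiffAt_two_sub_cpow hz)
  calc Δ sqrtBarrier z = -(sqrtBarrier z / (16 * (‖w‖ * t ^ 2))) := by
        rw [hΔ]
        field_simp
        ring
    _ ≤ -(sqrtBarrier z / (16 * ‖w‖ ^ 2)) := by
        have := sqrtBarrier_nonneg z
        rw [sq ‖w‖]
        gcongr

/-- `sqrtBarrier` corrected by a bounded term that is strongly superharmonic in the strip of width
`1 / K` to the left of the line `re z = l`. -/
noncomputable def stripBarrier (K l : ℝ) (z : ℂ) : ℝ :=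
  sqrtBarrier z + (1 - Real.exp (K * (z.re - l)))

variable {K l : ℝ}

lemma sqrtBarrier_le_stripBarrier (hK : 0 ≤ K) (hzl : z.re ≤ l) :
    sqrtBarrier z ≤ stripBarrier K l z := by
  have : Real.exp (K * (z.re - l)) ≤ 1 :=
    Real.exp_le_one_iff.2 (mul_nonpos_of_nonneg_of_nonpos hK (sub_nonpos.2 hzl))
  rw [stripBarrier]
  linarith

lemma stripBarrier_pos (hl : l ≤ 0) (hK : 0 ≤ K) (hzl : z.re ≤ l) : 0 < stripBarrier K l z :=
  one_pos.trans_le ((one_le_sqrtBarrier (hzl.trans hl)).trans (sqrtBarrier_le_stripBarrier hK hzl))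

lemma stripBarrier_le (hz : z.re ≤ 0) : stripBarrier K l z ≤ 2 * sqrtBarrier z := by
  rw [stripBarrier]
  linarith [one_le_sqrtBarrier hz, Real.exp_pos (K * (z.re - l))]

lemma contDiffAt_stripBarrier (hz : z.re ≤ 0) : ContDiffAt ℝ 2 (stripBarrier K l) z := by
  have hre : ContDiffAt ℝ 2 Complex.re z := Complex.reCLM.contDiff.contDiffAt
  exact (contDiffAt_sqrtBarrier hz).add (by fun_prop)

lemma laplacian_stripBarrier_le (hz : z.re ≤ 0) :
    Δ (stripBarrier K l) z ≤
      -(sqrtBarrier z / (16 * ‖2 - z‖ ^ 2)) - K ^ 2 * Real.exp (K * (z.re - l)) := by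
  set φ : ℝ → ℝ := fun t ↦ 1 - Real.exp (K * (t - l))
  have hφ : ContDiff ℝ 2 φ := by fun_prop
  have hexp (t : ℝ) : HasDerivAt (fun t ↦ Real.exp (K * (t - l)))
      (K * Real.exp (K * (t - l))) t := by
    simpa [mul_comm] using (((hasDerivAt_id t).sub_const l).const_mul K).exp
  have hφ' : deriv φ = fun t ↦ -(K * Real.exp (K * (t - l))) :=
    funext fun t ↦ ((hexp t).const_sub 1).deriv
  have hφ'' : deriv (deriv φ) z.re = -(K ^ 2 * Real.exp (K * (z.re - l))) := by
    rw [hφ', ((hexp z.re).const_mul K).fun_neg.deriv]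
    ring
  have hadd : Δ (stripBarrier K l) z = Δ sqrtBarrier z + Δ (fun w : ℂ ↦ φ w.re) z :=
    (contDiffAt_sqrtBarrier hz).laplacian_add
      (hφ.contDiffAt.comp z Complex.reCLM.contDiff.contDiffAt)
  rw [hadd, laplacian_comp_re hφ.contDiffAt, hφ'', ← sub_eq_add_neg]
  gcongr
  exact laplacian_sqrtBarrier_le hz

lemma laplacian_stripBarrier_add_mul_neg_of_norm_sq_mul_lt {c : ℝ} (hz : z.re ≤ 0) (hz1 : 1 ≤ ‖z‖)
    (hc0 : 0 ≤ c) (hc : 288 * (‖z‖ ^ 2 * c) < 1) :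
    Δ (stripBarrier K l) z + c * stripBarrier K l z < 0 := by
  have hq := one_le_sqrtBarrier hz
  have hw : ‖2 - z‖ ≤ 3 * ‖z‖ := by
    have h : ‖2 - z‖ ≤ 2 + ‖z‖ := by simpa using norm_sub_le 2 z
    linarith
  have hw0 : 0 < ‖2 - z‖ := by linarith [norm_le_norm_two_sub hz]
  have hexp : 0 ≤ K ^ 2 * Real.exp (K * (z.re - l)) := by positivity
  have hlt : 2 * c * sqrtBarrier z < sqrtBarrier z / (16 * ‖2 - z‖ ^ 2) := by
    rw [lt_div_iff₀ (by positivity)]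
    calc 2 * c * sqrtBarrier z * (16 * ‖2 - z‖ ^ 2)
        ≤ 2 * c * sqrtBarrier z * (16 * (3 * ‖z‖) ^ 2) := by gcongr
      _ = 288 * (‖z‖ ^ 2 * c) * sqrtBarrier z := by ring
      _ < sqrtBarrier z := mul_lt_of_lt_one_left (by linarith) hc
  have := mul_le_mul_of_nonneg_left (stripBarrier_le (K := K) (l := l) hz) hc0
  linarith [laplacian_stripBarrier_le (K := K) (l := l) hz]

lemma laplacian_stripBarrier_add_mul_neg_of_strip {c C R : ℝ} (hz : z.re ≤ 0) (hzR : ‖z‖ ≤ R)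
    (hzK : -1 ≤ K * (z.re - l)) (hc0 : 0 ≤ c) (hcC : c ≤ C)
    (hK : 2 * C * (R + 2) * Real.exp 1 < K ^ 2) :
    Δ (stripBarrier K l) z + c * stripBarrier K l z < 0 := by
  have hq : 0 ≤ sqrtBarrier z / (16 * ‖2 - z‖ ^ 2) :=
    div_nonneg (sqrtBarrier_nonneg z) (by positivity)
  have hlt : c * stripBarrier K l z < K ^ 2 * Real.exp (K * (z.re - l)) := by
    calc c * stripBarrier K l z ≤ C * (2 * (R + 2)) := by
          have hle := (stripBarrier_le (K := K) (l := l) hz).trans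
            (mul_le_mul_of_nonneg_left (sqrtBarrier_le hz) zero_le_two)
          exact (mul_le_mul_of_nonneg_left (hle.trans (by gcongr)) hc0).trans
            (mul_le_mul_of_nonneg_right hcC (by linarith [norm_nonneg z]))
      _ < K ^ 2 * Real.exp (-1) := by
          rw [Real.exp_neg, ← div_eq_mul_inv, lt_div_iff₀ (Real.exp_pos 1)]
          linarith
      _ ≤ K ^ 2 * Real.exp (K * (z.re - l)) := by gcongr
  linarith [laplacian_stripBarrier_le (K := K) (l := l) hz]

end Barrier

lemma eventually_mul_one_add_rpow_le_mul_rpow {p q : ℝ} (hp : 0 < p) (hqp : q < p) (C : ℝ) {η : ℝ}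
    (hη : 0 < η) : ∀ᶠ r : ℝ in atTop, C * (1 + r ^ q) ≤ η * r ^ p := by
  have hlim : Tendsto (fun r : ℝ ↦ C * (r ^ (-p) + r ^ (-(p - q)))) atTop (𝓝 (C * (0 + 0))) :=
    ((tendsto_rpow_neg_atTop hp).add (tendsto_rpow_neg_atTop (sub_pos.2 hqp))).const_mul C
  filter_upwards [hlim.eventually_le_const (by simpa using hη), eventually_gt_atTop 0] with r hr hr0
  calc C * (1 + r ^ q) = C * (r ^ (-p) + r ^ (-(p - q))) * r ^ p := by
        rw [mul_assoc, add_mul, ← Real.rpow_add hr0, ← Real.rpow_add hr0, neg_add_cancel,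
          Real.rpow_zero]
        ring_nf
    _ ≤ η * r ^ p := by gcongr

section Touching

lemma eventually_nhdsNE_ne {X : Type*} [TopologicalSpace X] [T1Space X] (a c : X) :
    ∀ᶠ x in 𝓝[≠] c, x ≠ a :=
  (eventually_cofinite_ne a).filter_mono (nhdsNE_le_cofinite c)

lemma pos_of_laplacian_neg {f : ℂ → ℝ} {c : ℂ} (hc : ContinuousAt f c)
    (hf : ∀ᶠ z in 𝓝[≠] c, ContDiffAt ℝ 2 f z) (hΔ : ∀ᶠ z in 𝓝[≠] c, Δ f z < 0)
    (hnonneg : ∀ᶠ z in 𝓝 c, 0 ≤ f z) : 0 < f c := by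
  refine hnonneg.self_of_nhds.lt_of_ne' fun h0 ↦ ?_
  have hzero : ∀ᶠ z in 𝓝 c, f =ᶠ[𝓝 z] fun _ ↦ 0 := eventually_eventually_nhds.2 <|
    eventually_eq_zero_of_laplacian_nonpos hc hf (hΔ.mono fun z ↦ le_of_lt) hnonneg h0
  obtain ⟨z, hz0, hz⟩ := ((hzero.filter_mono nhdsWithin_le_nhds).and hΔ).exists
  rw [(laplacian_congr_nhds hz0).self_of_nhds, laplacian_const] at hz
  exact lt_irrefl 0 hz

/-- The constant `m` is the maximum of `-f i / g` over all indices and all points of `s`. -/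
lemma exists_touching_point {ι X : Type*} [Finite ι] [TopologicalSpace X] {s : Set X}
    (hs : IsClosed s) {f : ι → X → ℝ} {g : X → ℝ} (hf : ∀ i, ContinuousOn (f i) s)
    (hg : ContinuousOn g s) (hg0 : ∀ x ∈ s, 0 < g x)
    (hfg : ∀ i, ∀ η > 0, ∀ᶠ x in cocompact X ⊓ 𝓟 s, -(η * g x) ≤ f i x)
    {i₀ : ι} {x₀ : X} (hx₀ : x₀ ∈ s) (hneg : f i₀ x₀ < 0) :
    ∃ m > 0, (∀ i, ∀ x ∈ s, 0 ≤ f i x + m * g x) ∧ ∃ i, ∃ c ∈ s, f i c + m * g c = 0 := by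
  cases nonempty_fintype ι
  have hι : (Finset.univ : Finset ι).Nonempty := ⟨i₀, Finset.mem_univ i₀⟩
  set ratio : X → ℝ := fun x ↦ Finset.univ.inf' hι fun i ↦ f i x / g x
  have hratio (i : ι) (x : X) : ratio x ≤ f i x / g x :=
    Finset.inf'_le (fun i ↦ f i x / g x) (Finset.mem_univ i)
  have hx₀neg : ratio x₀ < 0 := (hratio i₀ x₀).trans_lt (div_neg_of_neg_of_pos hneg (hg0 x₀ hx₀))
  have hcont : ContinuousOn ratio s :=
    ContinuousOn.finset_inf'_apply hι fun i _ ↦ (hf i).div hg fun x hx ↦ (hg0 x hx).ne'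
  have hlarge : ∀ᶠ x in cocompact X ⊓ 𝓟 s, ratio x₀ ≤ ratio x := by
    filter_upwards [eventually_all.2 fun i ↦ hfg i (-ratio x₀) (neg_pos.2 hx₀neg),
      mem_inf_of_right (mem_principal_self s)] with x hx hxs
    refine Finset.le_inf' hι _ fun i _ ↦ ?_
    rw [le_div_iff₀ (hg0 x hxs)]
    linarith [hx i]
  obtain ⟨c, hc, hmin⟩ := hcont.exists_isMinOn' hs hx₀ hlarge
  obtain ⟨i, -, hi⟩ := Finset.exists_mem_eq_inf' hι fun i ↦ f i c / g c
  refine ⟨-ratio c, neg_pos.2 ((hmin hx₀).trans_lt hx₀neg), fun j x hx ↦ ?_, i, c, hc, ?_⟩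
  · have := (le_div_iff₀ (hg0 x hx)).1 ((hmin hx).trans (hratio j x))
    linarith
  · rw [show ratio c = f i c / g c from hi]
    have := (hg0 c hc).ne'
    field_simp
    ring

end Touching

section Reflection

/-- The reflection in the line `re z = l`. -/
noncomputable def lineReflection (l : ℝ) (z : ℂ) : ℂ :=
  2 * l - conj z

@[simp] lemma re_lineReflection (l : ℝ) (z : ℂ) : (lineReflection l z).re = 2 * l - z.re := by
  simp [lineReflection]

@[simp] lemma im_lineReflection (l : ℝ) (z : ℂ) : (lineReflection l z).im = z.im := by
  simp [lineReflection]

lemma continuous_uncurry_lineReflection : Continuous fun p : ℝ × ℂ ↦ lineReflection p.1 p.2 := by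
  unfold lineReflection
  fun_prop

lemma contDiff_lineReflection (l : ℝ) {n : WithTop ℕ∞} : ContDiff ℝ n (lineReflection l) :=
  contDiff_const.sub Complex.conjCLE.contDiff

variable {l : ℝ} {z : ℂ}

lemma lineReflection_ne_zero (hz : z ≠ 2 * l) : lineReflection l z ≠ 0 := by
  intro h
  refine hz ?_
  rw [← Complex.conj_conj z, ← sub_eq_zero.1 h, map_mul, Complex.conj_ofReal, Complex.conj_ofNat]

lemma lineReflection_of_re_eq (hz : z.re = l) : lineReflection l z = z := by
  apply Complex.ext
  · rw [re_lineReflection, hz]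
    ring
  · simp

lemma norm_lineReflection_lt (hl : l < 0) (hz : z.re < l) : ‖lineReflection l z‖ < ‖z‖ := by
  rw [← sq_lt_sq₀ (norm_nonneg _) (norm_nonneg _), Complex.sq_norm, Complex.sq_norm,
    Complex.normSq_apply, Complex.normSq_apply, re_lineReflection, im_lineReflection]
  nlinarith

lemma laplacian_comp_lineReflection {F : Type*} [NormedAddCommGroup F] [NormedSpace ℝ F]
    (f : ℂ → F) (l : ℝ) (z : ℂ) :
    Δ (fun w ↦ f (lineReflection l w)) z = Δ f (lineReflection l z) := by
  have h := laplacian_comp_linearIsometryEquiv (fun w ↦ f (2 * l + w))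
    (Complex.conjLIE.trans (LinearIsometryEquiv.neg ℝ)) z
  rw [laplacian_comp_add_left] at h
  simpa [lineReflection, sub_eq_add_neg] using h

end Reflection

/-! ### Moving planes -/

section MovingPlanes

/-- The difference between the reflection of `u i` in the line `re z = l` and `u i` itself. -/
noncomputable def reflectionGap {ι : Type*} (u : ι → ℂ → ℝ) (l : ℝ) (i : ι) (z : ℂ) : ℝ :=
  u i (lineReflection l z) - u i z

/-- The moving plane has reached the position `l`: to the left of the line `re z = l`, no component
of `u` exceeds its reflection in that line. -/
def ReflectionGapNonneg {ι : Type*} (u : ι → ℂ → ℝ) (l : ℝ) : Prop :=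
  ∀ i (z : ℂ), z.re ≤ l → 0 ≤ reflectionGap u l i z

lemma reflectionGap_of_re_eq {ι : Type*} (u : ι → ℂ → ℝ) {l : ℝ} (i : ι) {z : ℂ}
    (hz : z.re = l) : reflectionGap u l i z = 0 := by
  rw [reflectionGap, lineReflection_of_re_eq hz, sub_self]

lemma ne_zero_of_re_neg {z : ℂ} (hz : z.re < 0) : z ≠ 0 := fun h ↦ by
  simp [h] at hz

lemma eventually_nhdsNE_re_lt_and_ne {l : ℝ} {c : ℂ} (hc : c.re < l) :
    ∀ᶠ z : ℂ in 𝓝[≠] c, z.re < l ∧ z ≠ 2 * l :=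
  ((Complex.continuous_re.continuousAt.eventually_lt_const hc).filter_mono
    nhdsWithin_le_nhds).and (eventually_nhdsNE_ne _ c)

variable {ι : Type*} {β : ι → ℝ} {u : ι → ℂ → ℝ} {l : ℝ} {z : ℂ}

lemma liouvilleDensity_mul_reflectionGap_le (hl : l < 0) (hz : z.re < l) (hz' : z ≠ 2 * l)
    {j : ι} (hβ : β j ≤ 0) :
    liouvilleDensity β u j z * reflectionGap u l j z ≤
      liouvilleDensity β u j (lineReflection l z) - liouvilleDensity β u j z := by
  have hpow : ‖z‖ ^ β j ≤ ‖lineReflection l z‖ ^ β j :=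
    Real.rpow_le_rpow_of_nonpos (norm_pos_iff.2 (lineReflection_ne_zero hz'))
      (norm_lineReflection_lt hl hz).le hβ
  have hexp : Real.exp (u j (lineReflection l z)) =
      Real.exp (u j z) * Real.exp (reflectionGap u l j z) := by
    rw [← Real.exp_add, reflectionGap, add_sub_cancel]
  calc liouvilleDensity β u j z * reflectionGap u l j z
      ≤ liouvilleDensity β u j z * (Real.exp (reflectionGap u l j z) - 1) :=
        mul_le_mul_of_nonneg_left (le_sub_iff_add_le.2 (Real.add_one_le_exp _))
          (liouvilleDensity_nonneg β u j z)
    _ = ‖z‖ ^ β j * Real.exp (u j (lineReflection l z)) - liouvilleDensity β u j z := by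
        rw [hexp, liouvilleDensity]
        ring
    _ ≤ liouvilleDensity β u j (lineReflection l z) - liouvilleDensity β u j z := by
        rw [liouvilleDensity, liouvilleDensity]
        gcongr

lemma reflectionGap_eq_zero_of_liouvilleDensity_eq (hl : l < 0) (hz : z.re < l) (hz' : z ≠ 2 * l)
    {j : ι} (hβ : β j ≤ 0) (hgap : 0 ≤ reflectionGap u l j z)
    (hρ : liouvilleDensity β u j (lineReflection l z) = liouvilleDensity β u j z) :
    reflectionGap u l j z = 0 ∧ β j = 0 := by
  have hz0 : 0 < ‖z‖ := norm_pos_iff.2 (ne_zero_of_re_neg (hz.trans hl))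
  have hρ0 : 0 < liouvilleDensity β u j z := mul_pos (Real.rpow_pos_of_pos hz0 _) (Real.exp_pos _)
  have hle := liouvilleDensity_mul_reflectionGap_le (u := u) hl hz hz' hβ
  rw [hρ, sub_self] at hle
  have h0 : reflectionGap u l j z = 0 := (nonpos_of_mul_nonpos_right hle hρ0).antisymm hgap
  refine ⟨h0, hβ.eq_of_not_lt fun hneg ↦ ?_⟩
  have hpow : ‖z‖ ^ β j < ‖lineReflection l z‖ ^ β j := Real.rpow_lt_rpow_of_neg
    (norm_pos_iff.2 (lineReflection_ne_zero hz')) (norm_lineReflection_lt hl hz) hneg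
  rw [liouvilleDensity, liouvilleDensity, sub_eq_zero.1 h0] at hρ
  exact hpow.ne' (mul_right_cancel₀ (Real.exp_pos _).ne' hρ)

variable [Fintype ι] {A : Matrix ι ι ℝ}

namespace IsLiouvilleSolution

lemma continuous_uncurry_reflectionGap (hu : IsLiouvilleSolution A β u) (i : ι) :
    Continuous fun p : ℝ × ℂ ↦ reflectionGap u p.1 i p.2 :=
  ((hu.continuous i).comp continuous_uncurry_lineReflection).sub
    ((hu.continuous i).comp continuous_snd)

lemma continuous_reflectionGap (hu : IsLiouvilleSolution A β u) (l : ℝ) (i : ι) :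
    Continuous (reflectionGap u l i) :=
  (hu.continuous_uncurry_reflectionGap i).comp (Continuous.prodMk_right l)

lemma contDiffAt_comp_lineReflection (hu : IsLiouvilleSolution A β u) (i : ι) (hz' : z ≠ 2 * l) :
    ContDiffAt ℝ 2 (fun w ↦ u i (lineReflection l w)) z :=
  (hu.contDiffAt i _ (lineReflection_ne_zero hz')).comp z (contDiff_lineReflection l).contDiffAt

lemma contDiffAt_reflectionGap (hu : IsLiouvilleSolution A β u) (i : ι) (hz : z ≠ 0)
    (hz' : z ≠ 2 * l) : ContDiffAt ℝ 2 (reflectionGap u l i) z :=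
  (hu.contDiffAt_comp_lineReflection i hz').sub (hu.contDiffAt i z hz)

lemma laplacian_reflectionGap (hu : IsLiouvilleSolution A β u) (i : ι) (hz : z ≠ 0)
    (hz' : z ≠ 2 * l) :
    Δ (reflectionGap u l i) z = -∑ j, A i j *
      (liouvilleDensity β u j (lineReflection l z) - liouvilleDensity β u j z) := by
  have hsub : Δ (reflectionGap u l i) z = Δ (fun w ↦ u i (lineReflection l w)) z - Δ (u i) z :=
    (hu.contDiffAt_comp_lineReflection i hz').laplacian_sub (hu.contDiffAt i z hz)
  rw [hsub, laplacian_comp_lineReflection, hu.laplacian_eq i _ (lineReflection_ne_zero hz'),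
    hu.laplacian_eq i z hz]
  simp only [mul_sub, Finset.sum_sub_distrib, liouvillePotential]
  ring

lemma laplacian_reflectionGap_le (hu : IsLiouvilleSolution A β u) (hA : ∀ i j, 0 ≤ A i j)
    (hβ : ∀ i, β i ≤ 0) (hl : l < 0) (i : ι) (hz : z.re < l) (hz' : z ≠ 2 * l) :
    Δ (reflectionGap u l i) z ≤
      -∑ j, A i j * (liouvilleDensity β u j z * reflectionGap u l j z) := by
  rw [hu.laplacian_reflectionGap i (ne_zero_of_re_neg (hz.trans hl)) hz', neg_le_neg_iff]
  gcongr with j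
  exacts [hA i j, liouvilleDensity_mul_reflectionGap_le hl hz hz' (hβ j)]

lemma laplacian_reflectionGap_add_mul_neg (hu : IsLiouvilleSolution A β u)
    (hA : ∀ i j, 0 ≤ A i j) (hβ : ∀ i, β i ≤ 0) (hl : l < 0) {i : ι} (hz : z.re < l)
    (hz' : z ≠ 2 * l) {g : ℂ → ℝ} (hg : ContDiffAt ℝ 2 g z)
    (hΔg : Δ g z + liouvillePotential A β u i z * g z < 0) {m : ℝ} (hm : 0 < m)
    (hgap : ∀ j, 0 ≤ reflectionGap u l j z + m * g z) :
    Δ (fun w ↦ reflectionGap u l i w + m * g w) z < 0 := by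
  have hadd : Δ (fun w ↦ reflectionGap u l i w + m * g w) z =
      Δ (reflectionGap u l i) z + m * Δ g z := by
    rw [← laplacian_const_mul m hg]
    exact (hu.contDiffAt_reflectionGap i (ne_zero_of_re_neg (hz.trans hl)) hz').laplacian_add
      (contDiffAt_const.mul hg)
  have hsum : -∑ j, A i j * (liouvilleDensity β u j z * reflectionGap u l j z) ≤
      m * (liouvillePotential A β u i z * g z) := by
    rw [liouvillePotential, Finset.sum_mul, Finset.mul_sum, ← Finset.sum_neg_distrib]
    refine Finset.sum_le_sum fun j _ ↦ ?_
    have := mul_nonneg (mul_nonneg (hA i j) (liouvilleDensity_nonneg β u j z)) (hgap j)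
    linarith
  rw [hadd]
  have := mul_neg_of_pos_of_neg hm hΔg
  linarith [hu.laplacian_reflectionGap_le hA hβ hl i hz hz']

lemma eventually_neg_mul_stripBarrier_le_reflectionGap (hu : IsLiouvilleSolution A β u)
    (hA : ∀ i j, 0 ≤ A i j) (hβ : ∀ i, -2 < β i) (hl : l < 0) {K : ℝ} (hK : 0 ≤ K) (i : ι)
    {η : ℝ} (hη : 0 < η) :
    ∀ᶠ z in cocompact ℂ ⊓ 𝓟 {z | z.re ≤ l}, -(η * stripBarrier K l z) ≤ reflectionGap u l i z := by
  obtain ⟨C, ε, hC, hε, hε4, hgrowth⟩ :=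
    hu.exists_rpow_lt_forall_abs_le hA hβ (show (0 : ℝ) < 1 / 4 by norm_num)
  have hlarge := eventually_mul_one_add_rpow_le_mul_rpow (p := 1 / 4) (by norm_num) hε4 (2 * C)
    (show 0 < η / 2 ^ (1 / 4 : ℝ) by positivity)
  have hgap {z : ℂ} (hz : z.re < l) : -(2 * C * (1 + ‖z‖ ^ ε)) ≤ reflectionGap u l i z := by
    have hrefl : ‖lineReflection l z‖ ^ ε ≤ ‖z‖ ^ ε := by
      have := (norm_lineReflection_lt hl hz).le
      gcongr
    have := neg_le_of_abs_le (hgrowth i (lineReflection l z))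
    have := le_of_abs_le (hgrowth i z)
    have := mul_le_mul_of_nonneg_left hrefl hC
    rw [reflectionGap]
    linarith
  have hcob : ∀ᶠ z in cocompact ℂ,
      2 * C * (1 + ‖z‖ ^ ε) ≤ η / 2 ^ (1 / 4 : ℝ) * ‖z‖ ^ (1 / 4 : ℝ) :=
    (tendsto_norm_cocompact_atTop (E := ℂ)).eventually hlarge
  filter_upwards [hcob.filter_mono inf_le_left, mem_inf_of_right (mem_principal_self _)]
    with z hz (hzl : z.re ≤ l)
  have hbarrier : 0 < stripBarrier K l z := stripBarrier_pos hl.le hK hzl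
  obtain hzl' | hzl' := hzl.lt_or_eq
  · have hq := (rpow_le_sqrtBarrier (hzl.trans hl.le)).trans (sqrtBarrier_le_stripBarrier hK hzl)
    rw [Real.div_rpow (norm_nonneg z) zero_le_two] at hq
    have := mul_le_mul_of_nonneg_left hq hη.le
    have := hgap hzl'
    rw [div_mul_eq_mul_div, ← mul_div_assoc] at *
    linarith
  · rw [reflectionGap_of_re_eq u i hzl', neg_nonpos]
    positivity

/-- At a touching point of the gap and a negative multiple of the barrier, the sum of the two would
be a superharmonic function with an interior zero minimum. -/
lemma reflectionGapNonneg_of_stripBarrier (hu : IsLiouvilleSolution A β u)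
    (hA : ∀ i j, 0 ≤ A i j) (hβ : ∀ i, -2 < β i ∧ β i ≤ 0) (hl : l < 0) {K : ℝ} (hK : 0 ≤ K)
    {s : Set ℂ} (hs : IsClosed s) (hgap : ∀ i, ∀ z ∈ s, 0 ≤ reflectionGap u l i z)
    (hΔ : ∀ i, ∀ z ∉ s, z.re < l →
      Δ (stripBarrier K l) z + liouvillePotential A β u i z * stripBarrier K l z < 0) :
    ReflectionGapNonneg u l := by
  intro i₀ z₀ hz₀
  by_contra! hneg
  have hg {z : ℂ} (hz : z.re ≤ l) : ContDiffAt ℝ 2 (stripBarrier K l) z :=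
    contDiffAt_stripBarrier (hz.trans hl.le)
  have hg0 {z : ℂ} (hz : z.re ≤ l) : 0 < stripBarrier K l z := stripBarrier_pos hl.le hK hz
  obtain ⟨m, hm, hnonneg, i, c, hcl : c.re ≤ l, hc⟩ := exists_touching_point
    (isClosed_le Complex.continuous_re continuous_const)
    (fun i ↦ (hu.continuous_reflectionGap l i).continuousOn)
    (fun z hz ↦ (hg hz).continuousAt.continuousWithinAt) (fun z hz ↦ hg0 hz)
    (fun i η hη ↦ hu.eventually_neg_mul_stripBarrier_le_reflectionGap hA (fun i ↦ (hβ i).1) hl hK i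
      hη) hz₀ hneg
  have hmc : 0 < m * stripBarrier K l c := mul_pos hm (hg0 hcl)
  have hcs : c ∉ s := fun h ↦ by linarith [hgap i c h]
  have hcl' : c.re < l := hcl.lt_of_ne fun h ↦ by linarith [reflectionGap_of_re_eq u i h]
  have hleft : ∀ᶠ z : ℂ in 𝓝 c, z.re < l :=
    Complex.continuous_re.continuousAt.eventually_lt_const hcl'
  refine hc.not_gt (pos_of_laplacian_neg
    (f := fun z ↦ reflectionGap u l i z + m * stripBarrier K l z) ?_ ?_ ?_ ?_)
  · exact (hu.continuous_reflectionGap l i).continuousAt.add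
      (continuousAt_const.mul (hg hcl).continuousAt)
  · filter_upwards [eventually_nhdsNE_re_lt_and_ne hcl'] with z ⟨hz, hz'⟩
    exact (hu.contDiffAt_reflectionGap i (ne_zero_of_re_neg (hz.trans hl)) hz').add
      (contDiffAt_const.mul (hg hz.le))
  · filter_upwards [eventually_nhdsNE_re_lt_and_ne hcl',
      nhdsWithin_le_nhds (hs.isOpen_compl.mem_nhds hcs)] with z ⟨hz, hz'⟩ hzs
    exact hu.laplacian_reflectionGap_add_mul_neg hA (fun i ↦ (hβ i).2) hl hz hz' (hg hz.le)
      (hΔ i z hzs hz) hm fun j ↦ hnonneg j z hz.le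
  · exact hleft.mono fun z hz ↦ hnonneg i z hz.le

lemma exists_norm_sq_mul_liouvillePotential_lt (hu : IsLiouvilleSolution A β u)
    (hA : ∀ i j, 0 ≤ A i j) {κ : ℝ} (hκ : 0 < κ) :
    ∃ R ≥ 1, ∀ i, ∀ z : ℂ, R ≤ ‖z‖ → ‖z‖ ^ 2 * liouvillePotential A β u i z < κ := by
  set a := ∑ i, ∑ j, A i j
  have ha : 0 ≤ a := Finset.sum_nonneg fun i _ ↦ Finset.sum_nonneg fun j _ ↦ hA i j
  obtain ⟨R, hR, hdecay⟩ :=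
    hu.exists_sq_mul_sum_liouvilleDensity_le hA (show 0 < κ / (a + 1) by positivity)
  refine ⟨R, hR, fun i z hz ↦ ?_⟩
  calc ‖z‖ ^ 2 * liouvillePotential A β u i z
    _ ≤ ‖z‖ ^ 2 * (a * ∑ j, liouvilleDensity β u j z) := by
        gcongr
        exact liouvillePotential_le hA β u i z
    _ = a * (‖z‖ ^ 2 * ∑ j, liouvilleDensity β u j z) := mul_left_comm ..
    _ ≤ a * (κ / (a + 1)) := by
        gcongr
        exact hdecay z hz
    _ < κ := by
        rw [← mul_div_assoc, div_lt_iff₀ (by positivity)]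
        linarith

lemma exists_liouvillePotential_le (hu : IsLiouvilleSolution A β u) {a : ℝ} (ha : a < 0) (R : ℝ) :
    ∃ C, ∀ i, ∀ z : ℂ, z.re ≤ a → ‖z‖ ≤ R → liouvillePotential A β u i z ≤ C := by
  have hcompact : IsCompact ({z : ℂ | z.re ≤ a} ∩ closedBall 0 R) :=
    (isCompact_closedBall 0 R).inter_left (isClosed_le Complex.continuous_re continuous_const)
  have hcont : ContinuousOn (fun z i ↦ liouvillePotential A β u i z)
      ({z : ℂ | z.re ≤ a} ∩ closedBall 0 R) := by
    intro z hz
    have hz0 : ‖z‖ ≠ 0 := norm_ne_zero_iff.2 (ne_zero_of_re_neg (lt_of_le_of_lt hz.1 ha))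
    refine ContinuousAt.continuousWithinAt (continuousAt_pi.2 fun i ↦
      tendsto_finsetSum _ fun j _ ↦ continuousAt_const.mul ?_)
    exact (continuous_norm.continuousAt.rpow_const (.inl hz0)).mul
      (hu.continuous j).continuousAt.rexp
  obtain ⟨C, hC⟩ := hcompact.exists_bound_of_continuousOn hcont
  refine ⟨C, fun i z hza hzR ↦ ?_⟩
  calc liouvillePotential A β u i z ≤ ‖fun i ↦ liouvillePotential A β u i z‖ :=
        (Real.le_norm_self _).trans (norm_le_pi_norm (fun i ↦ liouvillePotential A β u i z) i)
    _ ≤ C := hC z ⟨hza, mem_closedBall_zero_iff.2 hzR⟩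

lemma exists_forall_reflectionGapNonneg (hu : IsLiouvilleSolution A β u)
    (hA : ∀ i j, 0 ≤ A i j) (hβ : ∀ i, -2 < β i ∧ β i ≤ 0) :
    ∃ a, ∀ l ≤ a, ReflectionGapNonneg u l := by
  obtain ⟨R, hR, hdecay⟩ :=
    hu.exists_norm_sq_mul_liouvillePotential_lt hA (show (0 : ℝ) < 1 / 288 by norm_num)
  refine ⟨-R, fun l hl ↦ ?_⟩
  refine hu.reflectionGapNonneg_of_stripBarrier hA hβ (by linarith) zero_le_one isClosed_empty
    (by simp) fun i z _ hz ↦ ?_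
  have hzR : R ≤ ‖z‖ := by linarith [neg_le_of_abs_le (Complex.abs_re_le_norm z)]
  exact laplacian_stripBarrier_add_mul_neg_of_norm_sq_mul_lt (by linarith) (hR.trans hzR)
    (liouvillePotential_nonneg hA β u i z) (by linarith [hdecay i z hzR])

lemma reflectionGap_eqOn_zero_of_eq_zero (hu : IsLiouvilleSolution A β u)
    (hA : ∀ i j, 0 ≤ A i j) (hβ : ∀ i, β i ≤ 0) (hl : l < 0) (hgap : ReflectionGapNonneg u l)
    {i : ι} (hz : z.re < l) (h0 : reflectionGap u l i z = 0) :
    EqOn (reflectionGap u l i) 0 {z | z.re < l} := by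
  have hlocal {c : ℂ} (hc : c.re < l) (hc0 : reflectionGap u l i c = 0) :
      c ∈ interior {w | reflectionGap u l i w = 0} := by
    refine mem_interior_iff_mem_nhds.2 (eventually_eq_zero_of_laplacian_nonpos
      (hu.continuous_reflectionGap l i).continuousAt ?_ ?_ ?_ hc0)
    · filter_upwards [eventually_nhdsNE_re_lt_and_ne hc] with w ⟨hw, hw'⟩
      exact hu.contDiffAt_reflectionGap i (ne_zero_of_re_neg (hw.trans hl)) hw'
    · filter_upwards [eventually_nhdsNE_re_lt_and_ne hc] with w ⟨hw, hw'⟩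
      refine (hu.laplacian_reflectionGap_le hA hβ hl i hw hw').trans (neg_nonpos.2 ?_)
      exact Finset.sum_nonneg fun j _ ↦ mul_nonneg (hA i j)
        (mul_nonneg (liouvilleDensity_nonneg β u j w) (hgap j w hw.le))
    · filter_upwards [Complex.continuous_re.continuousAt.eventually_lt_const hc] with w hw
      exact hgap i w hw.le
  have hclosed : IsClosed {w | reflectionGap u l i w = 0} :=
    isClosed_eq (hu.continuous_reflectionGap l i) continuous_const
  have hsub := (convex_halfSpace_re_lt l).isPreconnected.subset_of_closure_inter_subset
    isOpen_interior ⟨z, hz, hlocal hz h0⟩ fun c hc ↦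
      hlocal hc.2 (closure_minimal interior_subset hclosed hc.1)
  exact hsub.trans interior_subset

/-- Equality at an index spreads along the nonzero entries of `A`, because then every term of the
sum in `laplacian_reflectionGap` vanishes. -/
lemma reflectionGap_eqOn_zero_of_eqOn_zero (hu : IsLiouvilleSolution A β u) (hA : ∀ i j, 0 ≤ A i j)
    (hβ : ∀ i, β i ≤ 0) (hl : l < 0) (hgap : ReflectionGapNonneg u l) {i j : ι}
    (hi : EqOn (reflectionGap u l i) 0 {z | z.re < l}) (hij : 0 < A i j) :
    EqOn (reflectionGap u l j) 0 {z | z.re < l} ∧ β j = 0 := by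
  obtain ⟨z, hz, hz'⟩ : ∃ z : ℂ, z.re < l ∧ z ≠ 2 * l :=
    (eventually_nhdsNE_re_lt_and_ne (c := (l - 1 : ℝ)) (by simp)).exists
  have hnhds : reflectionGap u l i =ᶠ[𝓝 z] 0 :=
    (Complex.continuous_re.continuousAt.eventually_lt_const hz).mono hi
  have hΔ : Δ (reflectionGap u l i) z = 0 := by
    exact (laplacian_congr_nhds hnhds).self_of_nhds.trans (congrFun laplacian_const z)
  rw [hu.laplacian_reflectionGap i (ne_zero_of_re_neg (hz.trans hl)) hz', neg_eq_zero] at hΔ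
  have hterm (k : ι) :
      0 ≤ liouvilleDensity β u k (lineReflection l z) - liouvilleDensity β u k z :=
    (mul_nonneg (liouvilleDensity_nonneg β u k z) (hgap k z hz.le)).trans
      (liouvilleDensity_mul_reflectionGap_le hl hz hz' (hβ k))
  have hj := (Finset.sum_eq_zero_iff_of_nonneg fun k _ ↦ mul_nonneg (hA i k) (hterm k)).1 hΔ j
    (Finset.mem_univ j)
  obtain ⟨h0, hβj⟩ := reflectionGap_eq_zero_of_liouvilleDensity_eq hl hz hz' (hβ j)
    (hgap j z hz.le) (sub_eq_zero.1 ((mul_eq_zero.1 hj).resolve_left hij.ne'))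
  exact ⟨hu.reflectionGap_eqOn_zero_of_eq_zero hA hβ hl hgap hz h0, hβj⟩

lemma reflectionGap_pos (hu : IsLiouvilleSolution A β u) (hA : A.IsIrreducible)
    (hβ : ∀ i, β i ≤ 0) (hβ0 : ∃ i, β i ≠ 0) (hl : l < 0) (hgap : ReflectionGapNonneg u l) (i : ι)
    (hz : z.re < l) : 0 < reflectionGap u l i z := by
  refine (hgap i z hz.le).lt_of_ne' fun h0 ↦ ?_
  let : Quiver ι := A.toQuiver
  have hpath {j : ι} (p : Quiver.Path i j) : EqOn (reflectionGap u l j) 0 {z | z.re < l} := by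
    induction p with
    | nil => exact hu.reflectionGap_eqOn_zero_of_eq_zero hA.nonneg hβ hl hgap hz h0
    | cons _ e ih =>
      exact (hu.reflectionGap_eqOn_zero_of_eqOn_zero hA.nonneg hβ hl hgap ih e.down).1
  obtain ⟨j, hj⟩ := hβ0
  obtain ⟨p, hp⟩ := hA.connected i j
  obtain ⟨k, q, e, rfl⟩ := (Quiver.Path.length_ne_zero_iff_eq_cons p).1 hp.ne'
  exact hj (hu.reflectionGap_eqOn_zero_of_eqOn_zero hA.nonneg hβ hl hgap (hpath q) e.down).2

lemma eventually_forall_reflectionGap_pos (hu : IsLiouvilleSolution A β u) (hA : A.IsIrreducible)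
    (hβ : ∀ i, β i ≤ 0) (hβ0 : ∃ i, β i ≠ 0) {L : ℝ} (hL : L < 0) (hgap : ReflectionGapNonneg u L)
    {δ : ℝ} (hδ : 0 < δ) (R : ℝ) :
    ∀ᶠ l in 𝓝 L, ∀ i, ∀ z : ℂ, z.re ≤ L - δ → ‖z‖ ≤ R → 0 < reflectionGap u l i z := by
  have hcompact : IsCompact ({z : ℂ | z.re ≤ L - δ} ∩ closedBall 0 R) :=
    (isCompact_closedBall 0 R).inter_left (isClosed_le Complex.continuous_re continuous_const)
  refine eventually_all.2 fun i ↦ (hcompact.eventually_forall_of_forall_eventually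
    (P := fun l z ↦ 0 < reflectionGap u l i z) fun z hz ↦ ?_).mono fun l h z hzL hzR ↦
      h z ⟨hzL, mem_closedBall_zero_iff.2 hzR⟩
  have hzL : z.re < L := lt_of_le_of_lt hz.1 (sub_lt_self L hδ)
  exact (hu.continuous_uncurry_reflectionGap i).continuousAt.eventually_const_lt
    (hu.reflectionGap_pos hA hβ hβ0 hL hgap i hzL)

/-- Strict positivity at `L` persists nearby on a compact set; the complement of that set is covered
by the strip and the far region, where the barrier takes over. -/
lemma eventually_reflectionGapNonneg (hu : IsLiouvilleSolution A β u) (hA : A.IsIrreducible)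
    (hβ : ∀ i, -2 < β i ∧ β i ≤ 0) (hβ0 : ∃ i, β i ≠ 0) {L : ℝ} (hL : L < 0)
    (hgap : ReflectionGapNonneg u L) : ∀ᶠ l in 𝓝 L, ReflectionGapNonneg u l := by
  obtain ⟨R, hR, hdecay⟩ :=
    hu.exists_norm_sq_mul_liouvillePotential_lt hA.nonneg (show (0 : ℝ) < 1 / 288 by norm_num)
  obtain ⟨C, hbound⟩ := hu.exists_liouvillePotential_le (show L / 2 < 0 by linarith) R
  obtain ⟨K, hKC, hK⟩ : ∃ K : ℝ, 2 * C * (R + 2) * Real.exp 1 < K ^ 2 ∧ 0 < K :=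
    (((tendsto_pow_atTop two_ne_zero).eventually_gt_atTop _).and (eventually_gt_atTop 0)).exists
  have hδ : 0 < 1 / K / 2 := by positivity
  have hpos := hu.eventually_forall_reflectionGap_pos hA (fun i ↦ (hβ i).2) hβ0 hL hgap hδ R
  filter_upwards [hpos, eventually_lt_nhds (show L < L / 2 by linarith),
    eventually_lt_nhds (lt_add_of_pos_right L hδ)] with l hlpos hlL hlK
  have hclosed : IsClosed ({z : ℂ | z.re ≤ l - 1 / K} ∩ closedBall 0 R) :=
    (isClosed_le Complex.continuous_re continuous_const).inter isClosed_closedBall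
  refine hu.reflectionGapNonneg_of_stripBarrier hA.nonneg hβ (by linarith) hK.le hclosed
    (fun i z ⟨hzl, hzR⟩ ↦ (hlpos i z ?_ (mem_closedBall_zero_iff.1 hzR)).le) fun i z hzs hz ↦ ?_
  · linarith [show z.re ≤ l - 1 / K from hzl]
  have hnonneg := liouvillePotential_nonneg hA.nonneg β u i z
  obtain hzR | hzR := le_total R ‖z‖
  · exact laplacian_stripBarrier_add_mul_neg_of_norm_sq_mul_lt (by linarith) (hR.trans hzR) hnonneg
      (by linarith [hdecay i z hzR])
  · have hstrip : l - 1 / K < z.re :=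
      not_le.1 fun h ↦ hzs ⟨h, mem_closedBall_zero_iff.2 hzR⟩
    refine laplacian_stripBarrier_add_mul_neg_of_strip (by linarith) hzR ?_ hnonneg
      (hbound i z (by linarith) hzR) hKC
    rw [← div_le_iff₀' hK, neg_div]
    linarith

lemma isClosed_setOf_reflectionGapNonneg (hu : IsLiouvilleSolution A β u) :
    IsClosed {l | ReflectionGapNonneg u l} := by
  have hset : {l | ReflectionGapNonneg u l} =
      ⋂ i, ⋂ w : ℂ, {l : ℝ | 0 ≤ reflectionGap u l i ⟨l - |w.re|, w.im⟩} := by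
    ext l
    simp only [mem_ofPred_eq, mem_iInter]
    refine ⟨fun h i w ↦ h i _ (sub_le_self l (abs_nonneg w.re)), fun h i z hz ↦ ?_⟩
    simpa [abs_of_nonneg (sub_nonneg.2 hz)] using h i ⟨l - z.re, z.im⟩
  rw [hset]
  refine isClosed_iInter fun i ↦ isClosed_iInter fun w ↦ isClosed_le continuous_const ?_
  refine (hu.continuous_uncurry_reflectionGap i).comp (continuous_id.prodMk ?_)
  simp only [Complex.mk_eq_add_mul_I]
  fun_prop

theorem reflectionGapNonneg_zero (hu : IsLiouvilleSolution A β u) (hA : A.IsIrreducible)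
    (hβ : ∀ i, -2 < β i ∧ β i ≤ 0) (hβ0 : ∃ i, β i ≠ 0) : ReflectionGapNonneg u 0 := by
  obtain ⟨a, hstart⟩ := hu.exists_forall_reflectionGapNonneg hA.nonneg hβ
  have hneg : Iio 0 ⊆ {l | ReflectionGapNonneg u l} := fun b hb ↦
    IsClosed.Icc_subset_of_forall_mem_nhdsWithin (a := min a b)
      (hu.isClosed_setOf_reflectionGapNonneg.inter isClosed_Icc) (hstart _ (min_le_left a b))
      (fun L hL ↦ mem_nhdsWithin_of_mem_nhds
        (hu.eventually_reflectionGapNonneg hA hβ hβ0 (hL.2.2.trans hb) hL.1))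
      ⟨min_le_right a b, le_rfl⟩
  exact closure_minimal hneg hu.isClosed_setOf_reflectionGapNonneg (by simp)

end IsLiouvilleSolution

end MovingPlanes

/-! ### Radial symmetry -/

section Symmetry

variable {ι : Type*} [Fintype ι] {A : Matrix ι ι ℝ} {β : ι → ℝ} {u : ι → ℂ → ℝ}

namespace IsLiouvilleSolution

lemma comp_linearIsometryEquiv (hu : IsLiouvilleSolution A β u) (e : ℂ ≃ₗᵢ[ℝ] ℂ) :
    IsLiouvilleSolution A β fun i z ↦ u i (e z) := by
  have hdensity (j : ι) (z : ℂ) :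
      liouvilleDensity β (fun i z ↦ u i (e z)) j z = liouvilleDensity β u j (e z) := by
    rw [liouvilleDensity, liouvilleDensity, e.norm_map]
  have he {z : ℂ} (hz : z ≠ 0) : e z ≠ 0 := fun h ↦ hz (e.map_eq_zero_iff.1 h)
  refine ⟨fun i ↦ (hu.continuous i).comp e.continuous, fun i z hz ↦ ?_, fun i z hz ↦ ?_,
    fun i ↦ ?_⟩
  · exact (hu.contDiffAt i _ (he hz)).comp z e.contDiff.contDiffAt
  · rw [laplacian_comp_linearIsometryEquiv, hu.laplacian_eq i _ (he hz)]
    simp only [liouvillePotential, hdensity]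
  · exact (e.measurePreserving.integrable_comp_of_integrable (hu.integrable i)).congr
      (.of_forall fun z ↦ (hdensity i z).symm)

lemma apply_neg_conj (hu : IsLiouvilleSolution A β u) (hA : A.IsIrreducible)
    (hβ : ∀ i, -2 < β i ∧ β i ≤ 0) (hβ0 : ∃ i, β i ≠ 0) (i : ι) (z : ℂ) :
    u i (-conj z) = u i z := by
  have hle {v : ι → ℂ → ℝ} (hv : IsLiouvilleSolution A β v) {w : ℂ} (hw : w.re ≤ 0) :
      v i w ≤ v i (-conj w) := by
    simpa [reflectionGap, lineReflection] using hv.reflectionGapNonneg_zero hA hβ hβ0 i w hw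
  have hleft {w : ℂ} (hw : w.re ≤ 0) : u i (-conj w) = u i w := by
    refine le_antisymm ?_ (hle hu hw)
    simpa using hle (hu.comp_linearIsometryEquiv
      (Complex.conjLIE.trans (LinearIsometryEquiv.neg ℝ))) hw
  obtain hz | hz := le_total z.re 0
  · exact hleft hz
  · simpa using (hleft (w := -conj z) (by simpa using hz)).symm

/-- The reflections `z ↦ -c² conj z`, `‖c‖ = 1`, act transitively on circles. -/
theorem eq_of_norm_eq (hu : IsLiouvilleSolution A β u) (hA : A.IsIrreducible)
    (hβ : ∀ i, -2 < β i ∧ β i ≤ 0) (hβ0 : ∃ i, β i ≠ 0) (i : ι) {z w : ℂ} (hzw : ‖z‖ = ‖w‖) :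
    u i z = u i w := by
  obtain rfl | hz := eq_or_ne z 0
  · rw [norm_zero, eq_comm, norm_eq_zero] at hzw
    rw [hzw]
  have hz' : conj z ≠ 0 := (map_ne_zero _).2 hz
  obtain ⟨c, hc⟩ := IsAlgClosed.exists_pow_nat_eq (-w / conj z) two_pos
  have hc1 : ‖c‖ = 1 := by
    rw [← sq_eq_sq₀ (norm_nonneg c) zero_le_one, ← norm_pow, hc, norm_div, norm_neg,
      Complex.norm_conj, hzw, div_self (hzw ▸ norm_ne_zero_iff.2 hz), one_pow]
  have hcc : c * conj c = 1 := by
    rw [Complex.mul_conj', hc1, Complex.ofReal_one, one_pow]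
  have hw : c * -(c * conj z) = w := by
    rw [mul_neg, ← mul_assoc, ← sq, hc, div_mul_cancel₀ _ hz', neg_neg]
  have h : u i (c * -conj (conj c * z)) = u i (c * (conj c * z)) :=
    (hu.comp_linearIsometryEquiv
      (rotation ⟨c, mem_sphere_zero_iff_norm.2 hc1⟩)).apply_neg_conj hA hβ hβ0 i (conj c * z)
  rw [map_mul, Complex.conj_conj, hw, ← mul_assoc, hcc, one_mul] at h
  exact h.symm

end IsLiouvilleSolution

end Symmetry

section Transfer

lemma deriv_deriv_comp_of_hasDerivAt_const {E F : Type*} [NormedAddCommGroup E] [NormedSpace ℝ E]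
    [NormedAddCommGroup F] [NormedSpace ℝ F] {f : E → F} {γ : ℝ → E} {v : E} {t : ℝ}
    (hf : ContDiffAt ℝ 2 f (γ t)) (hγ : ∀ s, HasDerivAt γ v s) :
    deriv (deriv fun s ↦ f (γ s)) t = fderiv ℝ (fderiv ℝ f) (γ t) v v := by
  have hfirst : deriv (fun s ↦ f (γ s)) =ᶠ[𝓝 t] fun s ↦ fderiv ℝ f (γ s) v :=
    ((hγ t).continuousAt.eventually (hf.eventually (by simp))).mono fun s hs ↦
      ((hs.differentiableAt two_ne_zero).hasFDerivAt.comp_hasDerivAt s (hγ s)).deriv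
  have hsecond : HasFDerivAt (fderiv ℝ f) (fderiv ℝ (fderiv ℝ f) (γ t)) (γ t) :=
    ((hf.fderiv_right (m := 1) le_rfl).differentiableAt one_ne_zero).hasFDerivAt
  rw [hfirst.deriv_eq]
  simpa using ((hsecond.comp_hasDerivAt t (hγ t)).clm_apply (hasDerivAt_const t v)).deriv

lemma lap_eq_laplacian {f : ℝ × ℝ → ℝ} {z : ℂ}
    (hf : ContDiffAt ℝ 2 (fun w : ℂ ↦ f (w.re, w.im)) z) :
    lap f (z.re, z.im) = Δ (fun w : ℂ ↦ f (w.re, w.im)) z := by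
  have hre (s : ℝ) : HasDerivAt (fun s : ℝ ↦ (⟨s, z.im⟩ : ℂ)) 1 s := by
    simpa [Complex.mk_eq_add_mul_I] using
      (Complex.ofRealCLM.hasDerivAt (x := s)).add_const (z.im * Complex.I)
  have him (t : ℝ) : HasDerivAt (fun t : ℝ ↦ (⟨z.re, t⟩ : ℂ)) Complex.I t := by
    simpa [Complex.mk_eq_add_mul_I] using
      ((Complex.ofRealCLM.hasDerivAt (x := t)).mul_const Complex.I).const_add (z.re : ℂ)
  rw [laplacian_eq_sum_fderiv_fderiv Complex.orthonormalBasisOneI, Fin.sum_univ_two]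
  simp only [Complex.coe_orthonormalBasisOneI, Matrix.cons_val_zero, Matrix.cons_val_one]
  exact congrArg₂ (· + ·)
    (deriv_deriv_comp_of_hasDerivAt_const (t := z.re) (f := fun w : ℂ ↦ f (w.re, w.im)) hf hre)
    (deriv_deriv_comp_of_hasDerivAt_const (t := z.im) (f := fun w : ℂ ↦ f (w.re, w.im)) hf him)

lemma nrm_re_im (z : ℂ) : nrm (z.re, z.im) = ‖z‖ :=
  (Complex.norm_eq_sqrt_sq_add_sq z).symm

variable {n : ℕ} {A : Matrix (Fin n) (Fin n) ℝ}

lemma PDESolution.isLiouvilleSolution {β : Fin n → ℝ} {u : Fin n → ℝ × ℝ → ℝ}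
    (hu : PDESolution A β u) : IsLiouvilleSolution A β fun i z ↦ u i (z.re, z.im) := by
  obtain ⟨hcont, hC2, heq, hint⟩ := hu
  have hC2' (i : Fin n) (z : ℂ) (hz : z ≠ 0) :
      ContDiffAt ℝ 2 (fun w : ℂ ↦ u i (w.re, w.im)) z :=
    (hC2 i _ (Complex.equivRealProdCLM.map_ne_zero_iff.2 hz)).comp z
      Complex.equivRealProdCLM.contDiff.contDiffAt
  refine ⟨fun i ↦ (hcont i).comp Complex.equivRealProdCLM.continuous, hC2', fun i z hz ↦ ?_,
    fun i ↦ ?_⟩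
  · have h := heq i (z.re, z.im) (Complex.equivRealProdCLM.map_ne_zero_iff.2 hz)
    rw [lap_eq_laplacian (hC2' i z hz)] at h
    simp only [nrm_re_im] at h
    simp only [liouvillePotential, liouvilleDensity, ← mul_assoc]
    exact eq_neg_of_add_eq_zero_left h
  · refine (Complex.volume_preserving_equiv_real_prod.integrable_comp_of_integrable (hint i)).congr
      (.of_forall fun z ↦ ?_)
    simp only [Function.comp_apply, Complex.measurableEquivRealProd_apply, nrm_re_im,
      liouvilleDensity]

lemma H1.isIrreducible (hA : H1 A) : A.IsIrreducible := by
  classical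
  obtain ⟨-, hnonneg, hcut, hdet⟩ := hA
  refine ⟨hnonneg, fun i j ↦ ?_⟩
  let : Quiver (Fin n) := A.toQuiver
  have hedge {k m : Fin n} (h : A k m ≠ 0) : k ⟶ m := ⟨(hnonneg k m).lt_of_ne' h⟩
  set S := Finset.univ.filter fun k ↦ ∃ p : Quiver.Path i k, 0 < p.length
  have hS {k : Fin n} : k ∈ S ↔ ∃ p : Quiver.Path i k, 0 < p.length := by simp [S]
  have hSne : S.Nonempty := by
    by_contra! h
    refine hdet.ne_zero (Matrix.det_eq_zero_of_row_eq_zero i fun k ↦ by_contra fun hk ↦ ?_)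
    have : k ∈ S := hS.2 ⟨(hedge hk).toPath, one_pos⟩
    simp [h] at this
  suffices S = Finset.univ from hS.1 (this ▸ Finset.mem_univ j)
  by_contra h
  obtain ⟨k, hk, m, hm, hkm⟩ := hcut S hSne h
  obtain ⟨p, -⟩ := hS.1 hk
  exact Finset.mem_compl.1 hm (hS.2 ⟨p.cons (hedge hkm), Nat.succ_pos _⟩)

end Transfer

theorem all_solutions_radial_of_nonpositive_beta_general {n : ℕ}
    (A : Matrix (Fin n) (Fin n) ℝ) (β : Fin n → ℝ) (hA : A.IsIrreducible)
    (hβ : ∀ i, -2 < β i ∧ β i ≤ 0) (hβ0 : ∃ i, β i ≠ 0)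
    (u : Fin n → ℝ × ℝ → ℝ) (hu : PDESolution A β u) :
    ∀ i, ∀ x y : ℝ × ℝ, nrm x = nrm y → u i x = u i y := fun i x y hxy ↦
  hu.isLiouvilleSolution.eq_of_norm_eq hA hβ hβ0 i (z := ⟨x.1, x.2⟩) (w := ⟨y.1, y.2⟩) <| by
    rwa [← nrm_re_im, ← nrm_re_im]

theorem all_solutions_radial_of_nonpositive_beta {n : ℕ} (hn : 0 < n)
    (A : Matrix (Fin n) (Fin n) ℝ) (β : Fin n → ℝ)
    (hA : H1 A) (hβ : ∀ i, -2 < β i ∧ β i ≤ 0) (hβ0 : ∃ i, β i ≠ 0)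
    (u : Fin n → ℝ × ℝ → ℝ) (hu : PDESolution A β u) :
    ∀ i, ∀ x y : ℝ × ℝ, nrm x = nrm y → u i x = u i y :=
  all_solutions_radial_of_nonpositive_beta_general A β hA.isIrreducible hβ hβ0 u hu
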